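/- arXiv:1512.02670 — 3 statements merged into one kernel-verified Lean document; each statement's English description precedes it below -/
import Mathlib

section
/- (Konyagin–Shkredov.) There exists an absolute constant c > 0 such that for every finite set A ⊆ ℝ \ {0} with |A| ≥ 2, one has |A:A|⁶·|A−A|⁵ ≥ c·|A|^14 / (log|A|)². -/
open Finset
open scoped Pointwise

/-!
Let `r(x)` be the number of representations `x = a + b` with `a ∈ A` and `b ∈ B`, and let `S` be the
set of `x` with `r(x) ≥ t`. Each such representation yields `|A|` incidences between the grid
`(A / A) × S` and the lines `y = c x + b` with `c ∈ A` and `b ∈ B`, namely the points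
`(a / c, a + b)`. Cut the grid into boxes of equal size: a line, being monotone, meets few of them,
and two points of a box lie on at most one line. This elementary case of the Szemerédi–Trotter
theorem gives `|A| |S| t³ ≤ 130 |A / A|² |B|²`. Summing over `t` bounds the third energy
`E₃(A) = ∑ r_{A-A}(x)³`, for `B = -A`, and the additive energy `E(A, A - A)`, for `B = A - A`.

The two energies are tied by `|A|⁸ ≤ 8 |A - A| E₃(A) E(A, A - A)`. This follows from the
Cauchy–Schwarz inequality for the map `(a, b, c) ↦ (a - b, a - c)`, restricted to the triples for
which `b - c` is a popular difference: its collisions are counted by `E₃(A)`, and its image consists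
of pairs in `A - A` whose difference is popular, of which `E(A, A - A)` allows only few.
-/

namespace KonyaginShkredov

section Blocks

variable {α : Type*} [LinearOrder α]

/-- The number of elements of `Q` below `x`: the position of `x` in the increasing enumeration of
`Q`, starting from `0`. -/
def rank (Q : Finset α) (x : α) : ℕ := #{y ∈ Q | y < x}

/-- The index of the block containing `x` when `Q` is cut into consecutive blocks of `u` elements.
The blocks are the sides of the cells in the incidence bound; `x` need not lie in `Q`. -/
def block (Q : Finset α) (u : ℕ) (x : α) : ℕ := rank Q x / u

lemma rank_mono (Q : Finset α) : Monotone (rank Q) := fun _ _ hxy =>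
  card_le_card <| monotone_filter_right Q fun _ _ hz => hz.trans_le hxy

lemma rank_strictMonoOn (Q : Finset α) : StrictMonoOn (rank Q) Q := fun x hx y _ hxy =>
  card_lt_card <| (ssubset_iff_of_subset <|
    monotone_filter_right Q fun _ _ hz => hz.trans hxy).2 ⟨x, by simp_all⟩

lemma block_mono (Q : Finset α) (u : ℕ) : Monotone (block Q u) := fun _ _ hxy =>
  Nat.div_le_div_right (rank_mono Q hxy)

lemma block_le (Q : Finset α) (u : ℕ) (x : α) : block Q u x ≤ #Q / u :=
  Nat.div_le_div_right (card_filter_le _ _)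

lemma card_filter_block_eq_le (Q : Finset α) {u : ℕ} (hu : 0 < u) (k : ℕ) :
    #{y ∈ Q | block Q u y = k} ≤ u := by
  refine (card_le_card_of_injOn (t := range u) (rank Q · % u) ?_ ?_).trans_eq (card_range u)
  · intro y _
    simpa using Nat.mod_lt _ hu
  · intro y hy z hz hmod
    simp only [coe_filter, Set.mem_ofPred_eq] at hy hz
    refine (rank_strictMonoOn Q).injOn hy.1 hz.1 ?_
    have hdiv : rank Q y / u = rank Q z / u := hy.2.trans hz.2.symm
    calc rank Q y = u * (rank Q y / u) + rank Q y % u := (Nat.div_add_mod _ u).symm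
      _ = u * (rank Q z / u) + rank Q z % u := by rw [hdiv, show rank Q y % u = _ from hmod]
      _ = rank Q z := Nat.div_add_mod _ u

lemma card_pairs_block_eq_le (Q : Finset α) {u : ℕ} (hu : 0 < u) :
    #{p ∈ Q ×ˢ Q | block Q u p.1 = block Q u p.2} ≤ #Q * u := by
  have hfibre (x : α) : #{y ∈ Q | block Q u x = block Q u y} ≤ u := by
    simpa only [eq_comm] using card_filter_block_eq_le Q hu (block Q u x)
  simp only [card_filter, sum_product] at hfibre ⊢
  exact sum_le_card_nsmul _ _ _ fun x _ => hfibre x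

end Blocks

section Counting

variable {α β : Type*}

lemma card_image_prodMk_le_of_monotone [LinearOrder α] {f g : α → ℕ} {m n : ℕ}
    (hf : Monotone f) (hg : Monotone g) (hfm : ∀ x, f x ≤ m) (hgn : ∀ x, g x ≤ n)
    (X : Finset α) : #(X.image fun x => (f x, g x)) ≤ m + n + 1 := by
  rw [← card_range (m + n + 1)]
  refine card_le_card_of_injOn (fun p => p.1 + p.2) ?_ ?_
  · simp only [coe_image, Set.mapsTo_image_iff, coe_range]
    exact fun x _ => Nat.lt_succ_of_le (Nat.add_le_add (hfm x) (hgn x))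
  · simp only [coe_image]
    rintro _ ⟨x, -, rfl⟩ _ ⟨y, -, rfl⟩ hsum
    simp only [Prod.mk.injEq] at hsum ⊢
    rcases le_total x y with hxy | hxy
    all_goals have := hf hxy; have := hg hxy; omega

lemma card_image_prodMk_le_of_antitone [LinearOrder α] {f g : α → ℕ} {m n : ℕ}
    (hf : Monotone f) (hg : Antitone g) (hfm : ∀ x, f x ≤ m) (hgn : ∀ x, g x ≤ n)
    (X : Finset α) : #(X.image fun x => (f x, g x)) ≤ m + n + 1 := by
  have hreflect : (X.image fun x => (f x, n - g x)).image (fun p => (p.1, n - p.2)) =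
      X.image fun x => (f x, g x) := by
    rw [image_image]
    exact image_congr fun x _ => by simp [Nat.sub_sub_self (hgn x)]
  rw [← hreflect]
  exact card_image_le.trans <| card_image_prodMk_le_of_monotone hf
    (fun _ _ hxy => Nat.sub_le_sub_left (hg hxy) n) hfm (fun _ => Nat.sub_le _ _) X

lemma card_le_card_image_add_card_collisions [DecidableEq β] (X : Finset α) (φ : α → β) :
    #X ≤ #(X.image φ) + #{p ∈ X.offDiag | φ p.1 = φ p.2} := by
  have hfibre (y : β) : {p ∈ {p ∈ X.offDiag | φ p.1 = φ p.2} | φ p.1 = y} =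
      offDiag {x ∈ X | φ x = y} := by
    ext p
    simp only [mem_filter, mem_offDiag]
    grind
  rw [card_eq_sum_card_image φ X, card_eq_sum_ones (X.image φ),
    card_eq_sum_card_fiberwise (s := {p ∈ X.offDiag | φ p.1 = φ p.2}) (f := fun p => φ p.1)
      (t := X.image φ) (by grind [Set.MapsTo]), ← sum_add_distrib]
  refine sum_le_sum fun y _ => ?_
  rw [hfibre, offDiag_card, ← Nat.mul_sub_one]
  cases #{x ∈ X | φ x = y} with
  | zero => simp
  | succ k => rw [Nat.add_sub_cancel]; nlinarith

lemma card_sq_le_card_mul_card_collisions [DecidableEq β] {T : Finset α} {W : Finset β}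
    {φ : α → β} (hφ : ∀ t ∈ T, φ t ∈ W) :
    #T ^ 2 ≤ #W * #{p ∈ T ×ˢ T | φ p.1 = φ p.2} := by
  have hcollisions : ∑ w ∈ W, #{t ∈ T | φ t = w} ^ 2 = #{p ∈ T ×ˢ T | φ p.1 = φ p.2} := by
    rw [card_eq_sum_card_fiberwise (f := fun p : α × α => φ p.1) (t := W)
      (by grind [Set.MapsTo])]
    refine sum_congr rfl fun w _ => ?_
    rw [sq, ← card_product]
    congr 1
    grind
  rw [← hcollisions, card_eq_sum_card_fiberwise (f := φ) (s := T) (t := W) hφ]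
  exact sq_sum_le_card_mul_sum_sq

lemma sum_le_two_mul_sum_filter_popular (s : Finset α) (f : α → ℕ) :
    ∑ i ∈ s, f i ≤ 2 * ∑ i ∈ s with ∑ j ∈ s, f j ≤ 2 * #s * f i, f i := by
  rcases s.eq_empty_or_nonempty with rfl | hs
  · simp
  set total := ∑ j ∈ s, f j
  have hunpopular : #s * (2 * ∑ i ∈ s with ¬ total ≤ 2 * #s * f i, f i) ≤ #s * total :=
    calc #s * (2 * ∑ i ∈ s with ¬ total ≤ 2 * #s * f i, f i)
        = ∑ i ∈ s with ¬ total ≤ 2 * #s * f i, 2 * #s * f i := by rw [← mul_sum]; ring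
      _ ≤ ∑ i ∈ s with ¬ total ≤ 2 * #s * f i, total := by
        refine sum_le_sum fun i hi => ?_
        exact (not_le.1 (mem_filter.1 hi).2).le
      _ ≤ ∑ _ ∈ s, total := sum_le_sum_of_subset (filter_subset _ _)
      _ = #s * total := by rw [sum_const, smul_eq_mul]
  have hle := Nat.le_of_mul_le_mul_left hunpopular hs.card_pos
  have hsplit := sum_filter_add_sum_filter_not s (fun i => total ≤ 2 * #s * f i) f
  omega

end Counting

section Incidences

variable {K : Type*} [Field K] [LinearOrder K]

/-- The points of the grid `Q × S` on the line `y = l.1 * x + l.2`, recorded by their abscissae. -/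
def pointsOn (Q S : Finset K) (l : K × K) : Finset K := {q ∈ Q | l.1 * q + l.2 ∈ S}

/-- The cell of the point of abscissa `q` on the line `y = l.1 * x + l.2`, when `Q × S` is cut into
boxes of `u` columns and `v` rows. -/
def cell (Q S : Finset K) (u v : ℕ) (l : K × K) (q : K) : ℕ × ℕ :=
  (block Q u q, block S v (l.1 * q + l.2))

lemma card_image_cell_le [IsStrictOrderedRing K] (Q S X : Finset K) (u v : ℕ) (l : K × K) :
    #(X.image (cell Q S u v l)) ≤ #Q / u + #S / v + 1 := by
  rcases le_total 0 l.1 with hslope | hslope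
  · exact card_image_prodMk_le_of_monotone (block_mono Q u)
      ((block_mono S v).comp ((monotone_id.const_mul hslope).add_const l.2))
      (block_le Q u) (fun _ => block_le S v _) X
  · exact card_image_prodMk_le_of_antitone (block_mono Q u)
      ((block_mono S v).comp_antitone ((antitone_mul_left hslope).add_const l.2))
      (block_le Q u) (fun _ => block_le S v _) X

-- Two distinct points determine a line, so a pair of points of one cell is counted at most once.
lemma sum_card_collisions_le (Q S : Finset K) (L : Finset (K × K)) {u v : ℕ} (hu : 0 < u)
    (hv : 0 < v) :
    ∑ l ∈ L, #{p ∈ (pointsOn Q S l).offDiag | cell Q S u v l p.1 = cell Q S u v l p.2} ≤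
      (#Q * u) * (#S * v) := by
  rw [← card_sigma]
  refine le_trans ?_
    (Nat.mul_le_mul (card_pairs_block_eq_le Q hu) (card_pairs_block_eq_le S hv))
  rw [← card_product]
  refine card_le_card_of_injOn (fun t =>
    (t.2, (t.1.1 * t.2.1 + t.1.2, t.1.1 * t.2.2 + t.1.2))) ?_ ?_
  · rintro ⟨l, p⟩ ht
    simp only [coe_sigma, Set.mem_sigma_iff, mem_coe, mem_filter, mem_product, mem_offDiag,
      pointsOn, cell, Prod.mk.injEq] at ht ⊢
    tauto
  · rintro ⟨⟨c, b⟩, ⟨q, r⟩⟩ ht ⟨⟨c', b'⟩, ⟨q', r'⟩⟩ _ heq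
    simp only [coe_sigma, Set.mem_sigma_iff, mem_coe, mem_filter, mem_offDiag] at ht
    simp only [Prod.mk.injEq] at heq
    obtain ⟨⟨rfl, rfl⟩, hq, hr⟩ := heq
    have hslope : c = c' :=
      mul_right_cancel₀ (sub_ne_zero.2 ht.2.1.2.2) (by linear_combination hq - hr)
    subst hslope
    have hintercept : b = b' := add_left_cancel hq
    rw [hintercept]

lemma sum_card_pointsOn_le [IsStrictOrderedRing K] (Q S : Finset K) (L : Finset (K × K))
    {u v : ℕ} (hu : 0 < u) (hv : 0 < v) :
    ∑ l ∈ L, #(pointsOn Q S l) ≤ #L * (#Q / u + #S / v + 1) + (#Q * u) * (#S * v) :=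
  calc ∑ l ∈ L, #(pointsOn Q S l)
      ≤ ∑ l ∈ L, (#((pointsOn Q S l).image (cell Q S u v l)) +
          #{p ∈ (pointsOn Q S l).offDiag | cell Q S u v l p.1 = cell Q S u v l p.2}) :=
        sum_le_sum fun _ _ => card_le_card_image_add_card_collisions _ _
    _ ≤ #L * (#Q / u + #S / v + 1) + (#Q * u) * (#S * v) := by
        rw [sum_add_distrib]
        exact add_le_add (sum_le_card_nsmul _ _ _ fun _ _ => card_image_cell_le ..)
          (sum_card_collisions_le Q S L hu hv)

end Incidences

section ElementaryInequalities

lemma add_one_pow_succ_le (m k : ℕ) : (m + 1) ^ (k + 1) ≤ m ^ (k + 1) + (k + 1) * (m + 1) ^ k := by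
  induction k with
  | zero => simp
  | succ k ih =>
    calc (m + 1) ^ (k + 2) = m * (m + 1) ^ (k + 1) + (m + 1) ^ (k + 1) := by ring
      _ ≤ m * (m ^ (k + 1) + (k + 1) * (m + 1) ^ k) + (m + 1) ^ (k + 1) := by gcongr
      _ = m ^ (k + 2) + (k + 1) * (m * (m + 1) ^ k) + (m + 1) ^ (k + 1) := by ring
      _ ≤ m ^ (k + 2) + (k + 1) * ((m + 1) * (m + 1) ^ k) + (m + 1) ^ (k + 1) := by
        gcongr; omega
      _ = m ^ (k + 2) + (k + 1 + 1) * (m + 1) ^ (k + 1) := by ring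

lemma pow_succ_le_mul_sum_Icc_pow (m k : ℕ) : m ^ (k + 1) ≤ (k + 1) * ∑ t ∈ Icc 1 m, t ^ k := by
  induction m with
  | zero => simp
  | succ m ih =>
    rw [sum_Icc_succ_top (by omega), mul_add]
    exact (add_one_pow_succ_le m k).trans (by gcongr)

-- Use the first bound for `t ≤ c`, where it is the smaller one, and the second bound beyond.
lemma sum_Icc_le_of_le_of_mul_sq_le {f : ℕ → ℝ} {a c : ℝ} (ha : 0 ≤ a) (hc : 0 ≤ c)
    (hfa : ∀ t, f t ≤ a) (hfc : ∀ t, f t * t ^ 2 ≤ a * c ^ 2) (n : ℕ) :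
    ∑ t ∈ Icc 1 n, f t ≤ 3 * (a * c) := by
  have hsmall : ∑ t ∈ Icc 1 n with t ≤ ⌊c⌋₊, f t ≤ a * c :=
    calc ∑ t ∈ Icc 1 n with t ≤ ⌊c⌋₊, f t ≤ ∑ t ∈ Icc 1 n with t ≤ ⌊c⌋₊, a :=
          sum_le_sum fun t _ => hfa t
      _ ≤ ∑ _ ∈ Icc 1 ⌊c⌋₊, a :=
          sum_le_sum_of_subset_of_nonneg (by grind) fun _ _ _ => ha
      _ = a * ⌊c⌋₊ := by simp [mul_comm]
      _ ≤ a * c := by gcongr; exact Nat.floor_le hc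
  have hlarge : ∑ t ∈ Icc 1 n with ¬ t ≤ ⌊c⌋₊, f t ≤ 2 * (a * c) :=
    calc ∑ t ∈ Icc 1 n with ¬ t ≤ ⌊c⌋₊, f t
        ≤ ∑ t ∈ Icc 1 n with ¬ t ≤ ⌊c⌋₊, a * c ^ 2 * ((t : ℝ) ^ 2)⁻¹ := by
          refine sum_le_sum fun t ht => ?_
          have ht0 : (0 : ℝ) < t := Nat.cast_pos.2 (by grind)
          rw [← div_eq_mul_inv, le_div_iff₀ (by positivity)]
          exact hfc t
      _ ≤ ∑ t ∈ Ioo ⌊c⌋₊ (n + 1), a * c ^ 2 * ((t : ℝ) ^ 2)⁻¹ :=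
          sum_le_sum_of_subset_of_nonneg (by grind) fun _ _ _ => by positivity
      _ ≤ a * c ^ 2 * (2 / (⌊c⌋₊ + 1)) := by
          rw [← mul_sum]; gcongr; exact sum_Ioo_inv_sq_le _ _
      _ = 2 * (a * c) * (c / (⌊c⌋₊ + 1)) := by ring
      _ ≤ 2 * (a * c) := mul_le_of_le_one_right (by positivity) <|
          div_le_one_of_le₀ (Nat.lt_floor_add_one c).le (by positivity)
  rw [← sum_filter_add_sum_filter_not (Icc 1 n) (· ≤ ⌊c⌋₊)]
  linarith

-- For `u ≈ τ² n / (q b)` and `v ≈ b / τ`, the terms of `hcell` containing `s` on the right are at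
-- most half of the left side.
lemma mul_mul_cube_le_of_cell_bound {n b q s τ u v : ℝ} (hτ : 0 < τ) (hτn : τ ≤ n)
    (hτb : τ ≤ b) (hnq : n ≤ q) (hs : 0 ≤ s)
    (hu : u ≤ τ ^ 2 * n / (32 * q * b)) (hu' : τ ^ 2 * n / (32 * q * b) / 2 ≤ u)
    (hv : v ≤ 2 * (4 * (b / τ))) (hv' : 4 * (b / τ) ≤ v)
    (hcell : n * (s * τ) ≤ n * b * (q / u + s / v + 1) + (q * u) * (s * v)) :
    n * (s * τ ^ 3) ≤ 130 * q ^ 2 * b ^ 2 := by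
  have hn : 0 < n := hτ.trans_le hτn
  have hb : 0 < b := hτ.trans_le hτb
  have hq : 0 < q := hn.trans_le hnq
  have hv0 : 0 ≤ v := le_trans (by positivity) hv'
  have hcollisions : (q * u) * (s * v) ≤ n * (s * τ) / 4 :=
    calc (q * u) * (s * v)
        ≤ (q * (τ ^ 2 * n / (32 * q * b))) * (s * (2 * (4 * (b / τ)))) := by gcongr
      _ = n * (s * τ) / 4 := by field_simp; ring
  have hrows : n * b * (s / v) ≤ n * (s * τ) / 4 :=
    calc n * b * (s / v) ≤ n * b * (s / (4 * (b / τ))) := by gcongr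
      _ = n * (s * τ) / 4 := by field_simp
  have hcolumns : n * b * (q / u) ≤ 64 * (q ^ 2 * b ^ 2 / τ ^ 2) :=
    calc n * b * (q / u) ≤ n * b * (q / (τ ^ 2 * n / (32 * q * b) / 2)) := by gcongr
      _ = 64 * (q ^ 2 * b ^ 2 / τ ^ 2) := by field_simp; ring
  have hlines : n * b ≤ q ^ 2 * b ^ 2 / τ ^ 2 := by
    rw [le_div_iff₀ (by positivity)]
    calc n * b * τ ^ 2 = n * τ * (b * τ) := by ring
      _ ≤ q * q * (b * b) := by gcongr; exact hτn.trans hnq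
      _ = q ^ 2 * b ^ 2 := by ring
  have hcombined : n * (s * τ) ≤ 130 * (q ^ 2 * b ^ 2 / τ ^ 2) := by linarith
  calc n * (s * τ ^ 3) = n * (s * τ) * τ ^ 2 := by ring
    _ ≤ 130 * (q ^ 2 * b ^ 2 / τ ^ 2) * τ ^ 2 := by gcongr
    _ = 130 * q ^ 2 * b ^ 2 := by field_simp

lemma mul_mul_cube_le_of_forall_cell_bound {n b q s τ : ℝ} (hτ : 0 < τ) (hτn : τ ≤ n)
    (hτb : τ ≤ b) (hnq : n ≤ q) (hs : 0 ≤ s) (htrivial : s * τ ≤ n * b)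
    (hcell : ∀ u v : ℕ, 0 < u → 0 < v →
      n * (s * τ) ≤ n * b * (q / u + s / v + 1) + (q * u) * (s * v)) :
    n * (s * τ ^ 3) ≤ 130 * q ^ 2 * b ^ 2 := by
  have hn : 0 < n := hτ.trans_le hτn
  have hb : 0 < b := hτ.trans_le hτb
  have hq : 0 < q := hn.trans_le hnq
  rcases lt_or_ge (τ ^ 2 * n / (32 * q * b)) 1 with hlt | hge
  · rw [div_lt_one (by positivity)] at hlt
    calc n * (s * τ ^ 3) = (s * τ) * (τ ^ 2 * n) := by ring
      _ ≤ (n * b) * (32 * q * b) := by gcongr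
      _ ≤ (q * b) * (32 * q * b) := by gcongr
      _ ≤ 130 * q ^ 2 * b ^ 2 := by nlinarith [mul_pos (pow_pos hq 2) (pow_pos hb 2)]
  · have hbτ : 1 ≤ b / τ := (one_le_div hτ).2 hτb
    exact mul_mul_cube_le_of_cell_bound hτ hτn hτb hnq hs
      (Nat.floor_le (by positivity)) (Nat.div_two_lt_floor hge).le
      (Nat.ceil_le_two_mul (by linarith)) (Nat.le_ceil _)
      (hcell _ _ (Nat.floor_pos.2 hge) (Nat.ceil_pos.2 (by positivity)))

end ElementaryInequalities

section RichSums

variable {G : Type*} [AddGroup G] [DecidableEq G]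

/-- The sums `a + b`, with `a ∈ A` and `b ∈ B`, that have at least `t` representations. -/
def richSums (A B : Finset G) (t : ℕ) : Finset G := {x ∈ A + B | t ≤ A.addConvolution B x}

lemma sum_addConvolution (A B S : Finset G) :
    ∑ x ∈ S, A.addConvolution B x = #{p ∈ A ×ˢ B | p.1 + p.2 ∈ S} :=
  sum_card_fiberwise_eq_card_filter _ _ _

lemma card_richSums_mul_le_sum (A B : Finset G) (t : ℕ) :
    #(richSums A B t) * t ≤ ∑ x ∈ richSums A B t, A.addConvolution B x :=
  card_nsmul_le_sum _ _ _ fun _ hx => (mem_filter.1 hx).2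

lemma card_richSums_mul_le (A B : Finset G) (t : ℕ) : #(richSums A B t) * t ≤ #A * #B :=
  calc #(richSums A B t) * t ≤ #{p ∈ A ×ˢ B | p.1 + p.2 ∈ richSums A B t} :=
        (card_richSums_mul_le_sum A B t).trans_eq (sum_addConvolution A B _)
    _ ≤ #A * #B := (card_filter_le _ _).trans_eq (card_product A B)

lemma sum_addConvolution_pow_le (A B : Finset G) (k : ℕ) :
    ∑ x ∈ A + B, A.addConvolution B x ^ (k + 1) ≤
      (k + 1) * ∑ t ∈ Icc 1 #A, t ^ k * #(richSums A B t) := by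
  have hlayers (x : G) : ∑ t ∈ Icc 1 (A.addConvolution B x), t ^ k =
      ∑ t ∈ Icc 1 #A, if t ≤ A.addConvolution B x then t ^ k else 0 := by
    have hle : A.addConvolution B x ≤ #A := addConvolution_le_card_left
    rw [← sum_filter]
    refine sum_congr ?_ fun _ _ => rfl
    grind
  calc ∑ x ∈ A + B, A.addConvolution B x ^ (k + 1)
      ≤ ∑ x ∈ A + B, (k + 1) * ∑ t ∈ Icc 1 (A.addConvolution B x), t ^ k :=
        sum_le_sum fun _ _ => pow_succ_le_mul_sum_Icc_pow _ _
    _ = (k + 1) * ∑ t ∈ Icc 1 #A, ∑ x ∈ A + B,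
          if t ≤ A.addConvolution B x then t ^ k else 0 := by
        rw [← mul_sum, sum_comm]
        simp only [hlayers]
    _ = (k + 1) * ∑ t ∈ Icc 1 #A, t ^ k * #(richSums A B t) := by
        simp only [← sum_filter, sum_const, smul_eq_mul, richSums, mul_comm]

end RichSums

section RichSumsOrderedField

variable {K : Type*} [Field K] [LinearOrder K]

lemma card_le_card_div_self_of_zero_notMem {A : Finset K} (hA : 0 ∉ A) : #A ≤ #(A / A) := by
  rcases A.eq_empty_or_nonempty with rfl | ⟨a, ha⟩
  · simp
  · rw [div_eq_mul_inv]
    exact card_le_card_mul_right₀ (inv_mem_inv ha) (inv_ne_zero fun h => hA (h ▸ ha))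

-- A representation `a + b ∈ S` and an element `c` of `A` give the point `(a / c, a + b)` on the
-- line `y = c * x + b`.
lemma card_mul_sum_addConvolution_le {A : Finset K} (hA : 0 ∉ A) (B S : Finset K) :
    #A * ∑ x ∈ S, A.addConvolution B x ≤ ∑ l ∈ A ×ˢ B, #(pointsOn (A / A) S l) := by
  have hline (c : K) (hc : c ∈ A) (b : K) :
      #{a ∈ A | a + b ∈ S} ≤ #(pointsOn (A / A) S (c, b)) := by
    have hc0 : c ≠ 0 := fun h => hA (h ▸ hc)
    refine card_le_card_of_injOn (· / c) (fun a ha => ?_)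
      fun a _ a' _ h => (div_left_inj' hc0).1 h
    simp only [coe_filter, Set.mem_ofPred_eq] at ha
    simpa [pointsOn, mul_div_cancel₀ a hc0, ha.2] using div_mem_div ha.1 hc
  have hpairs : ∑ x ∈ S, A.addConvolution B x = ∑ b ∈ B, #{a ∈ A | a + b ∈ S} := by
    simp only [sum_addConvolution, card_filter, sum_product_right]
  rw [sum_product, hpairs]
  exact card_nsmul_le_sum _ _ _ fun c hc => sum_le_sum fun b _ => hline c hc b

variable [IsStrictOrderedRing K]

lemma card_mul_card_richSums_mul_le {A : Finset K} (hA : 0 ∉ A) (B : Finset K) (t : ℕ)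
    {u v : ℕ} (hu : 0 < u) (hv : 0 < v) :
    (#A : ℝ) * (#(richSums A B t) * t) ≤
      #A * #B * (#(A / A) / u + #(richSums A B t) / v + 1) +
        (#(A / A) * u) * (#(richSums A B t) * v) := by
  have hnat : #A * (#(richSums A B t) * t) ≤
      #A * #B * (#(A / A) / u + #(richSums A B t) / v + 1) +
        (#(A / A) * u) * (#(richSums A B t) * v) := by
    rw [← card_product]
    exact (Nat.mul_le_mul_left _ (card_richSums_mul_le_sum A B t)).trans <|
      (card_mul_sum_addConvolution_le hA B _).trans (sum_card_pointsOn_le _ _ _ hu hv)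
  have hreal := Nat.cast_le (α := ℝ).2 hnat
  push_cast at hreal
  refine hreal.trans ?_
  gcongr <;> exact Nat.cast_div_le

lemma card_mul_card_richSums_mul_cube_le {A : Finset K} (hA : 0 ∉ A) (B : Finset K) (t : ℕ) :
    (#A : ℝ) * (#(richSums A B t) * t ^ 3) ≤ 130 * #(A / A) ^ 2 * #B ^ 2 := by
  rcases Nat.eq_zero_or_pos t with rfl | ht
  · rw [Nat.cast_zero, zero_pow three_ne_zero, mul_zero, mul_zero]
    positivity
  rcases (richSums A B t).eq_empty_or_nonempty with hempty | ⟨x, hx⟩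
  · rw [hempty, card_empty, Nat.cast_zero, zero_mul, mul_zero]
    positivity
  have htx : t ≤ A.addConvolution B x := (mem_filter.1 hx).2
  exact mul_mul_cube_le_of_forall_cell_bound (mod_cast ht)
    (mod_cast htx.trans addConvolution_le_card_left)
    (mod_cast htx.trans addConvolution_le_card_right)
    (mod_cast card_le_card_div_self_of_zero_notMem hA) (Nat.cast_nonneg _)
    (mod_cast card_richSums_mul_le A B t)
    fun _ _ hu hv => card_mul_card_richSums_mul_le hA B t hu hv

lemma card_mul_sum_addConvolution_cube_le {A : Finset K} (hA : 0 ∉ A) (B : Finset K) :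
    (#A : ℝ) * ∑ x ∈ A + B, (A.addConvolution B x : ℝ) ^ 3 ≤
      390 * #(A / A) ^ 2 * #B ^ 2 * (1 + Real.log #A) := by
  have hlayers : ∑ x ∈ A + B, (A.addConvolution B x : ℝ) ^ 3 ≤
      3 * ∑ t ∈ Icc 1 #A, (t : ℝ) ^ 2 * #(richSums A B t) :=
    mod_cast sum_addConvolution_pow_le A B 2
  have hharmonic : ∑ t ∈ Icc 1 #A, (t : ℝ)⁻¹ ≤ 1 + Real.log #A := by
    simpa [harmonic_eq_sum_Icc] using harmonic_le_one_add_log #A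
  have hlayer (t : ℕ) (ht : t ∈ Icc 1 #A) : #A * ((t : ℝ) ^ 2 * #(richSums A B t)) ≤
      130 * #(A / A) ^ 2 * #B ^ 2 * (t : ℝ)⁻¹ := by
    have ht0 : (0 : ℝ) < t := Nat.cast_pos.2 (mem_Icc.1 ht).1
    rw [← div_eq_mul_inv, le_div_iff₀ ht0]
    linarith [card_mul_card_richSums_mul_cube_le hA B t]
  calc (#A : ℝ) * ∑ x ∈ A + B, (A.addConvolution B x : ℝ) ^ 3
      ≤ #A * (3 * ∑ t ∈ Icc 1 #A, (t : ℝ) ^ 2 * #(richSums A B t)) := by gcongr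
    _ = 3 * ∑ t ∈ Icc 1 #A, #A * ((t : ℝ) ^ 2 * #(richSums A B t)) := by
        rw [← mul_sum]; ring
    _ ≤ 3 * ∑ t ∈ Icc 1 #A, 130 * #(A / A) ^ 2 * #B ^ 2 * (t : ℝ)⁻¹ := by
        gcongr 3 * ?_
        exact sum_le_sum hlayer
    _ = 390 * #(A / A) ^ 2 * #B ^ 2 * ∑ t ∈ Icc 1 #A, (t : ℝ)⁻¹ := by
        rw [← mul_sum]; ring
    _ ≤ 390 * #(A / A) ^ 2 * #B ^ 2 * (1 + Real.log #A) := by gcongr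

lemma addEnergy_sq_le {A : Finset K} (hA : 0 ∉ A) (B : Finset K) :
    (A.addEnergy B : ℝ) ^ 2 ≤ 4680 * #(A / A) ^ 2 * #B ^ 3 := by
  rcases A.eq_empty_or_nonempty with rfl | hAne
  · simp
  have hlayers : A.addEnergy B ≤ 2 * ∑ t ∈ Icc 1 #A, (t : ℝ) * #(richSums A B t) := by
    simpa [addEnergy_eq_sum_sq', addConvolution, one_add_one_eq_two] using
      Nat.cast_le (α := ℝ).2 (sum_addConvolution_pow_le A B 1)
  set cutoff : ℝ := √(130 * #B) * #(A / A) / #A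
  have hcutoff : cutoff ^ 2 = 130 * #B * #(A / A) ^ 2 / #A ^ 2 := by
    rw [div_pow, mul_pow, Real.sq_sqrt (by positivity)]
  have hsum : ∑ t ∈ Icc 1 #A, (t : ℝ) * #(richSums A B t) ≤ 3 * (#A * #B * cutoff) := by
    refine sum_Icc_le_of_le_of_mul_sq_le (by positivity) (by positivity) (fun t => ?_)
      (fun t => ?_) _
    · rw [mul_comm]
      exact_mod_cast card_richSums_mul_le A B t
    · have hrich := card_mul_card_richSums_mul_cube_le hA B t
      calc (t : ℝ) * #(richSums A B t) * t ^ 2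
          = (#A : ℝ) * (#(richSums A B t) * t ^ 3) / #A := by field_simp
        _ ≤ (130 * #(A / A) ^ 2 * #B ^ 2 : ℝ) / #A := by gcongr
        _ = #A * #B * cutoff ^ 2 := by rw [hcutoff]; field_simp
  calc (A.addEnergy B : ℝ) ^ 2
      ≤ (2 * (3 * (#A * #B * cutoff))) ^ 2 := by gcongr; exact hlayers.trans (by gcongr)
    _ = 36 * (#A * #B) ^ 2 * cutoff ^ 2 := by ring
    _ = 4680 * #(A / A) ^ 2 * #B ^ 3 := by rw [hcutoff]; field_simp; ring

end RichSumsOrderedField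

section PopularDifferences

variable {G : Type*} [AddGroup G] [DecidableEq G]

/-- The third moment of the number of representations of `x` as a difference of two elements
of `A`, written `E₃(A)` in the literature. -/
def thirdEnergy (A : Finset G) : ℕ := ∑ x ∈ A - A, A.addConvolution (-A) x ^ 3

/-- The differences of elements of `A` with at least half of the average number of
representations. -/
def popularDiffs (A : Finset G) : Finset G :=
  {s ∈ A - A | #A ^ 2 ≤ 2 * #(A - A) * A.addConvolution (-A) s}

/-- The pairs `(e, f)` of differences of `A` such that `f - e` is a popular difference. -/
def popularPairs (A : Finset G) : Finset (G × G) :=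
  {w ∈ (A - A) ×ˢ (A - A) | w.2 - w.1 ∈ popularDiffs A}

/-- The triples `(a, b, c)` of elements of `A` such that `b - c` is a popular difference. -/
def popularTriples (A : Finset G) : Finset (G × G × G) :=
  {t ∈ A ×ˢ A ×ˢ A | t.2.1 - t.2.2 ∈ popularDiffs A}

lemma sum_addConvolution_neg (A S : Finset G) :
    ∑ s ∈ S, A.addConvolution (-A) s = #{p ∈ A ×ˢ A | p.1 - p.2 ∈ S} := by
  simp only [← card_sub_eq, sum_card_fiberwise_eq_card_filter]

lemma sum_addConvolution_neg_sub_self (A : Finset G) :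
    ∑ s ∈ A - A, A.addConvolution (-A) s = #A ^ 2 := by
  rw [sum_addConvolution_neg, filter_true_of_mem, card_product, sq]
  exact fun p hp => sub_mem_sub (mem_product.1 hp).1 (mem_product.1 hp).2

lemma card_cube_le_two_mul_card_popularTriples (A : Finset G) :
    #A ^ 3 ≤ 2 * #(popularTriples A) := by
  have hpopular : #A ^ 2 ≤ 2 * ∑ s ∈ popularDiffs A, A.addConvolution (-A) s := by
    simpa only [sum_addConvolution_neg_sub_self, popularDiffs] using
      sum_le_two_mul_sum_filter_popular (A - A) (A.addConvolution (-A))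
  have hcard : #(popularTriples A) = #A * ∑ s ∈ popularDiffs A, A.addConvolution (-A) s := by
    rw [sum_addConvolution_neg, ← card_product, popularTriples]
    congr 1
    grind
  calc #A ^ 3 = #A * #A ^ 2 := by ring
    _ ≤ #A * (2 * ∑ s ∈ popularDiffs A, A.addConvolution (-A) s) := by gcongr
    _ = 2 * #(popularTriples A) := by rw [hcard]; ring

end PopularDifferences

section DifferencesCommGroup

variable {G : Type*} [AddCommGroup G] [DecidableEq G]

lemma card_collisions_triples_le_thirdEnergy (A : Finset G) :
    #{p ∈ (A ×ˢ A ×ˢ A) ×ˢ (A ×ˢ A ×ˢ A) |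
      (p.1.1 - p.1.2.1, p.1.1 - p.1.2.2) = (p.2.1 - p.2.2.1, p.2.1 - p.2.2.2)} ≤
      thirdEnergy A := by
  let fibre (x : G) : Finset (G × G) := {p ∈ A ×ˢ A | p.1 - p.2 = x}
  have henergy : thirdEnergy A = #((A - A).sigma fun x => fibre x ×ˢ fibre x ×ˢ fibre x) := by
    simp only [thirdEnergy, card_sigma, card_product, fibre, card_sub_eq]
    exact sum_congr rfl fun _ _ => by ring
  rw [henergy]
  refine card_le_card_of_injOn (fun p => ⟨p.1.1 - p.2.1,
    (p.1.1, p.2.1), (p.1.2.1, p.2.2.1), (p.1.2.2, p.2.2.2)⟩) ?_ ?_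
  · rintro ⟨⟨a, b, c⟩, ⟨a', b', c'⟩⟩ hp
    simp only [coe_filter, Set.mem_ofPred_eq, mem_product, Prod.mk.injEq] at hp
    obtain ⟨⟨⟨ha, hb, hc⟩, ha', hb', hc'⟩, hab, hac⟩ := hp
    simp only [coe_sigma, Set.mem_sigma_iff, mem_coe, mem_product, mem_filter, fibre]
    refine ⟨sub_mem_sub ha ha', ⟨⟨ha, ha'⟩, trivial⟩, ⟨⟨hb, hb'⟩, ?_⟩, ⟨hc, hc'⟩, ?_⟩
    · exact (sub_eq_sub_iff_sub_eq_sub.1 hab).symm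
    · exact (sub_eq_sub_iff_sub_eq_sub.1 hac).symm
  · rintro ⟨⟨a, b, c⟩, ⟨a', b', c'⟩⟩ _ ⟨⟨x, y, z⟩, ⟨x', y', z'⟩⟩ _ heq
    simp only [Sigma.mk.injEq, heq_eq_eq, Prod.mk.injEq] at heq ⊢
    tauto

lemma card_popularTriples_sq_le (A : Finset G) :
    #(popularTriples A) ^ 2 ≤ #(popularPairs A) * thirdEnergy A := by
  have hmaps : ∀ t ∈ popularTriples A, (t.1 - t.2.1, t.1 - t.2.2) ∈ popularPairs A := by
    rintro ⟨a, b, c⟩ ht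
    simp only [popularTriples, popularPairs, mem_filter, mem_product, sub_sub_sub_cancel_left]
      at ht ⊢
    exact ⟨⟨sub_mem_sub ht.1.1 ht.1.2.1, sub_mem_sub ht.1.1 ht.1.2.2⟩, ht.2⟩
  refine (card_sq_le_card_mul_card_collisions hmaps).trans (Nat.mul_le_mul_left _ ?_)
  refine (card_le_card ?_).trans (card_collisions_triples_le_thirdEnergy A)
  gcongr <;> exact filter_subset _ _

lemma sum_addConvolution_neg_sub_eq_addEnergy (A B : Finset G) :
    ∑ w ∈ B ×ˢ B, A.addConvolution (-A) (w.2 - w.1) = A.addEnergy B := by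
  simp only [← card_sub_eq, addEnergy, card_filter, sum_product (A ×ˢ A)]
  rw [sum_comm]
  simp only [sub_eq_sub_iff_add_eq_add, add_comm]

lemma card_popularPairs_mul_card_sq_le (A : Finset G) :
    #(popularPairs A) * #A ^ 2 ≤ 2 * #(A - A) * A.addEnergy (A - A) :=
  calc #(popularPairs A) * #A ^ 2
      ≤ ∑ w ∈ popularPairs A, 2 * #(A - A) * A.addConvolution (-A) (w.2 - w.1) :=
        card_nsmul_le_sum _ _ _ fun w hw => (mem_filter.1 (mem_filter.1 hw).2).2
    _ ≤ ∑ w ∈ (A - A) ×ˢ (A - A), 2 * #(A - A) * A.addConvolution (-A) (w.2 - w.1) :=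
        sum_le_sum_of_subset (filter_subset _ _)
    _ = 2 * #(A - A) * A.addEnergy (A - A) := by
        rw [← mul_sum, sum_addConvolution_neg_sub_eq_addEnergy]

lemma card_pow_eight_le (A : Finset G) :
    #A ^ 8 ≤ 8 * #(A - A) * thirdEnergy A * A.addEnergy (A - A) :=
  calc #A ^ 8 = (#A ^ 3) ^ 2 * #A ^ 2 := by ring
    _ ≤ (2 * #(popularTriples A)) ^ 2 * #A ^ 2 := by
        gcongr; exact card_cube_le_two_mul_card_popularTriples A
    _ = 4 * #(popularTriples A) ^ 2 * #A ^ 2 := by ring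
    _ ≤ 4 * (#(popularPairs A) * thirdEnergy A) * #A ^ 2 := by
        gcongr; exact card_popularTriples_sq_le A
    _ = 4 * thirdEnergy A * (#(popularPairs A) * #A ^ 2) := by ring
    _ ≤ 4 * thirdEnergy A * (2 * #(A - A) * A.addEnergy (A - A)) :=
        Nat.mul_le_mul_left _ (card_popularPairs_mul_card_sq_le A)
    _ = 8 * #(A - A) * thirdEnergy A * A.addEnergy (A - A) := by ring

end DifferencesCommGroup

lemma one_add_log_le_three_mul_log {x : ℝ} (hx : 2 ≤ x) : 1 + Real.log x ≤ 3 * Real.log x := by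
  have hlog : Real.log 2 ≤ Real.log x := Real.log_le_log two_pos hx
  linarith [Real.log_two_gt_d9]

lemma thirdEnergy_le {K : Type*} [Field K] [LinearOrder K] [IsStrictOrderedRing K] {A : Finset K}
    (hA : 0 ∉ A) (hcard : 2 ≤ #A) :
    (thirdEnergy A : ℝ) ≤ 1170 * #(A / A) ^ 2 * #A * Real.log #A := by
  have hA0 : (0 : ℝ) < #A := Nat.cast_pos.2 (by omega)
  refine le_of_mul_le_mul_left ?_ hA0
  calc (#A : ℝ) * thirdEnergy A = #A * ∑ x ∈ A + -A, (A.addConvolution (-A) x : ℝ) ^ 3 := by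
        rw [thirdEnergy, sub_eq_add_neg]; push_cast; rfl
    _ ≤ 390 * #(A / A) ^ 2 * #(-A) ^ 2 * (1 + Real.log #A) :=
        card_mul_sum_addConvolution_cube_le hA (-A)
    _ ≤ 390 * #(A / A) ^ 2 * #A ^ 2 * (3 * Real.log #A) := by
        rw [card_neg]
        gcongr
        exact one_add_log_le_three_mul_log (mod_cast hcard)
    _ = #A * (1170 * #(A / A) ^ 2 * #A * Real.log #A) := by ring

end KonyaginShkredov

open KonyaginShkredov in
theorem stmt_15_general {K : Type*} [Field K] [LinearOrder K] [IsStrictOrderedRing K]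
    {A : Finset K} (hA : 0 ∉ A) (hcard : 2 ≤ #A) :
    (64 * 1170 ^ 2 * 4680)⁻¹ * (#A : ℝ) ^ 14 / Real.log #A ^ 2 ≤
      (#(A / A) : ℝ) ^ 6 * (#(A - A) : ℝ) ^ 5 := by
  have hA0 : (0 : ℝ) < #A := Nat.cast_pos.2 (by omega)
  have hlog : 0 < Real.log #A := Real.log_pos (mod_cast hcard)
  have hcombinatorial : (#A : ℝ) ^ 8 ≤ 8 * #(A - A) * thirdEnergy A * A.addEnergy (A - A) :=
    mod_cast card_pow_eight_le A
  rw [mul_div_assoc, inv_mul_le_iff₀ (by positivity), div_le_iff₀ (by positivity)]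
  refine le_of_mul_le_mul_right ?_ (pow_pos hA0 2)
  calc (#A : ℝ) ^ 14 * #A ^ 2 = (#A ^ 8) ^ 2 := by ring
    _ ≤ (8 * #(A - A) * thirdEnergy A * A.addEnergy (A - A) : ℝ) ^ 2 := by gcongr
    _ = 64 * #(A - A) ^ 2 * (thirdEnergy A : ℝ) ^ 2 * (A.addEnergy (A - A) : ℝ) ^ 2 := by ring
    _ ≤ 64 * #(A - A) ^ 2 * (1170 * #(A / A) ^ 2 * #A * Real.log #A) ^ 2 *
          (4680 * #(A / A) ^ 2 * #(A - A) ^ 3) := by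
        gcongr
        · exact thirdEnergy_le hA hcard
        · exact addEnergy_sq_le hA (A - A)
    _ = 64 * 1170 ^ 2 * 4680 * (#(A / A) ^ 6 * #(A - A) ^ 5) * Real.log #A ^ 2 * #A ^ 2 := by ring

theorem stmt_15 :
    ∃ c : ℝ, 0 < c ∧
      ∀ A : Finset ℝ, (0 : ℝ) ∉ A → 2 ≤ A.card →
        c * (A.card : ℝ) ^ 14 / (Real.log (A.card : ℝ)) ^ 2
          ≤ ((A / A).card : ℝ) ^ 6 * ((A - A).card : ℝ) ^ 5 :=
  ⟨_, by positivity, fun _ hA hcard => stmt_15_general hA hcard⟩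
end

section
/- Let K > 0 and suppose that for every finite set P ⊆ ℝ² \ {0} the number of quadruples (q,q',r,r') ∈ P⁴ with ω(q,q') = ω(r,r') ≠ 0 is at most K·|P|³. Then there exists a constant c > 0 depending only on K such that for every δ > 0 and every finite set A ⊆ ℝ \ {0} with |A| ≥ 2 satisfying |AA| ≤ |A|^(1+δ), one has |A + A| ≥ c·|A|^(2−3δ) and |A − A| ≥ c·|A|^(2−3δ). -/
open Finset
open scoped Pointwise Classical

/-- The standard non-degenerate skew-symmetric bilinear form on `ℝ²`. -/
noncomputable def omegaForm (q q' : ℝ × ℝ) : ℝ := q.1 * q'.2 - q.2 * q'.1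

/-- The number of quadruples `(q,q',r,r') ∈ P⁴` with `ω(q,q') = ω(r,r') ≠ 0`. -/
noncomputable def omegaEnergy (P : Finset (ℝ × ℝ)) : ℕ :=
  ((P ×ˢ P ×ˢ P ×ˢ P).filter fun x =>
      omegaForm x.1 x.2.1 = omegaForm x.2.2.1 x.2.2.2 ∧
      omegaForm x.1 x.2.1 ≠ 0).card

/-!
By Cauchy–Schwarz, `|A|⁴ ≤ |A ± A| E(A)`, where the additive energy `E(A)` counts `|A|²` trivial
quadruples and those with `a - b = c - d ≠ 0`. The identity `a - b = ω((ae, f⁻¹), (bf, e⁻¹))`,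
valid for all nonzero `e` and `f`, represents each nontrivial quadruple in `|A|⁴` ways as a
solution of `ω(q, q') = ω(r, r') ≠ 0` over `P = AA × A⁻¹`. The assumed bound on the energy of `P`
thus gives `|A| E(A) ≤ (1 + K) |AA|³`, and hence `|A|⁵ ≤ (1 + K) |A ± A| |AA|³`.
-/

section AdditiveEnergy

open scoped Combinatorics.Additive

variable {G : Type*} [AddCommGroup G] [DecidableEq G]

/-- The quadruples `((a, b), (c, d))` over `A` with `a - b = c - d ≠ 0`: the additive quadruples
of `A`, in difference form, without the diagonal solutions `a = b`, `c = d`. -/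
def nontrivialQuadruples (A : Finset G) : Finset ((G × G) × (G × G)) :=
  {x ∈ (A ×ˢ A) ×ˢ (A ×ˢ A) | x.1.1 - x.1.2 = x.2.1 - x.2.2 ∧ x.1.1 - x.1.2 ≠ 0}

lemma addEnergy_neg_right (s t : Finset G) : E[s, -t] = E[s, t] :=
  card_equiv ((Equiv.refl (G × G)).prodCongr
    ((Equiv.prodComm G G).trans ((Equiv.neg G).prodCongr (Equiv.neg G)))) fun ⟨⟨a, b⟩, c, d⟩ => by
      have : a + c = b + d ↔ a + -d = b + -c := by grind
      simp [this, and_comm]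

lemma addEnergy_neg_right_eq_card_filter_sub (s t : Finset G) :
    E[s, -t] = #{x ∈ (s ×ˢ s) ×ˢ (t ×ˢ t) | x.1.1 - x.1.2 = x.2.1 - x.2.2} :=
  card_equiv ((Equiv.refl (G × G)).prodCongr ((Equiv.neg G).prodCongr (Equiv.neg G)))
    fun ⟨⟨a, b⟩, c, d⟩ => by
      have : a + c = b + d ↔ a - b = -c - -d := by grind
      simp [this]

lemma card_filter_diagonal_quadruples (A : Finset G) :
    #{x ∈ (A ×ˢ A) ×ˢ (A ×ˢ A) | x.1.1 - x.1.2 = x.2.1 - x.2.2 ∧ x.1.1 - x.1.2 = 0} = #A ^ 2 := by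
  rw [sq, ← card_product]
  refine card_nbij' (fun x => (x.1.1, x.2.1)) (fun y => ((y.1, y.1), (y.2, y.2))) ?_ ?_ ?_ ?_
  · intro x hx
    simp only [mem_coe, mem_filter, mem_product] at hx ⊢
    exact ⟨hx.1.1.1, hx.1.2.1⟩
  · intro y hy
    simpa using hy
  · rintro ⟨⟨a, b⟩, c, d⟩ hx
    obtain ⟨hsub, hab⟩ : a - b = c - d ∧ a - b = 0 := (mem_filter.1 (mem_coe.1 hx)).2
    obtain rfl : a = b := sub_eq_zero.1 hab
    obtain rfl : c = d := sub_eq_zero.1 (hsub ▸ hab)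
    rfl
  · exact fun _ _ => rfl

lemma addEnergy_self_eq_sq_add_card_nontrivialQuadruples (A : Finset G) :
    E[A] = #A ^ 2 + #(nontrivialQuadruples A) := by
  rw [← addEnergy_neg_right, addEnergy_neg_right_eq_card_filter_sub,
    ← card_filter_add_card_filter_not (fun x : (G × G) × (G × G) => x.1.1 - x.1.2 = 0),
    filter_filter, filter_filter, card_filter_diagonal_quadruples, nontrivialQuadruples]

lemma card_pow_four_le_card_add_mul_addEnergy (A : Finset G) : #A ^ 4 ≤ #(A + A) * E[A] := by
  have := le_card_add_mul_addEnergy A A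
  rwa [← pow_add] at this

lemma card_pow_four_le_card_sub_mul_addEnergy (A : Finset G) : #A ^ 4 ≤ #(A - A) * E[A] := by
  have := le_card_add_mul_addEnergy A (-A)
  rwa [card_neg, ← pow_add, addEnergy_neg_right, ← sub_eq_add_neg] at this

end AdditiveEnergy

section OmegaEnergy

open scoped Combinatorics.Additive

/-- The pair of points `(ae, f⁻¹)`, `(bf, e⁻¹)` built from `x = (a, b)` and `y = (e, f)`; the
dilations are chosen so that `ω` of the two points is `a - b` whatever `e, f ≠ 0` are. -/
noncomputable def dilatedPair (x y : ℝ × ℝ) : (ℝ × ℝ) × (ℝ × ℝ) :=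
  ((x.1 * y.1, y.2⁻¹), (x.2 * y.2, y.1⁻¹))

lemma omegaForm_dilatedPair {x y : ℝ × ℝ} (hy₁ : y.1 ≠ 0) (hy₂ : y.2 ≠ 0) :
    omegaForm (dilatedPair x y).1 (dilatedPair x y).2 = x.1 - x.2 := by
  simp only [omegaForm, dilatedPair]
  field_simp

lemma dilatedPair_inj {x y x' y' : ℝ × ℝ} (hy₁ : y.1 ≠ 0) (hy₂ : y.2 ≠ 0)
    (h : dilatedPair x y = dilatedPair x' y') : x = x' ∧ y = y' := by
  simp only [dilatedPair, Prod.mk.injEq, inv_inj] at h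
  obtain ⟨⟨hx₁, hy₂'⟩, hx₂, hy₁'⟩ := h
  rw [← hy₁'] at hx₁
  rw [← hy₂'] at hx₂
  exact ⟨Prod.ext (mul_right_cancel₀ hy₁ hx₁) (mul_right_cancel₀ hy₂ hx₂), Prod.ext hy₁' hy₂'⟩

variable {A B : Finset ℝ}

lemma dilatedPair_mem_product {x y : ℝ × ℝ} (hx : x ∈ A ×ˢ A) (hy : y ∈ B ×ˢ B) :
    dilatedPair x y ∈ ((A * B) ×ˢ B⁻¹) ×ˢ ((A * B) ×ˢ B⁻¹) := by
  rw [mem_product] at hx hy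
  exact mk_mem_product (mk_mem_product (mul_mem_mul hx.1 hy.1) (inv_mem_inv hy.2))
    (mk_mem_product (mul_mem_mul hx.2 hy.2) (inv_mem_inv hy.1))

lemma omegaEnergy_eq_card_filter_pairs (P : Finset (ℝ × ℝ)) :
    omegaEnergy P = #{x ∈ (P ×ˢ P) ×ˢ (P ×ˢ P) |
      omegaForm x.1.1 x.1.2 = omegaForm x.2.1 x.2.2 ∧ omegaForm x.1.1 x.1.2 ≠ 0} :=
  (card_equiv (Equiv.prodAssoc _ _ _) (by simp [and_assoc])).symm

lemma card_nontrivialQuadruples_mul_le_omegaEnergy (hB : 0 ∉ B) :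
    #(nontrivialQuadruples A) * #B ^ 4 ≤ omegaEnergy ((A * B) ×ˢ B⁻¹) := by
  have ne_zero : ∀ y ∈ B ×ˢ B, y.1 ≠ 0 ∧ y.2 ≠ 0 := fun y hy =>
    ⟨ne_of_mem_of_not_mem (mem_product.1 hy).1 hB, ne_of_mem_of_not_mem (mem_product.1 hy).2 hB⟩
  calc #(nontrivialQuadruples A) * #B ^ 4
      = #(nontrivialQuadruples A ×ˢ ((B ×ˢ B) ×ˢ (B ×ˢ B))) := by
        simp only [card_product]
        ring
    _ ≤ omegaEnergy ((A * B) ×ˢ B⁻¹) := by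
        rw [omegaEnergy_eq_card_filter_pairs]
        refine card_le_card_of_injOn
          (fun z => (dilatedPair z.1.1 z.2.1, dilatedPair z.1.2 z.2.2)) ?_ ?_
        · rintro ⟨⟨x, x'⟩, y, y'⟩ hz
          obtain ⟨hquad, hyy'⟩ := mem_product.1 (mem_coe.1 hz)
          obtain ⟨hxx', heq, hne⟩ := mem_filter.1 hquad
          obtain ⟨hx, hx'⟩ := mem_product.1 hxx'
          obtain ⟨hy, hy'⟩ := mem_product.1 hyy'
          have hω := omegaForm_dilatedPair (x := x) (ne_zero y hy).1 (ne_zero y hy).2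
          have hω' := omegaForm_dilatedPair (x := x') (ne_zero y' hy').1 (ne_zero y' hy').2
          rw [mem_coe, mem_filter, hω, hω']
          exact ⟨mk_mem_product (dilatedPair_mem_product hx hy) (dilatedPair_mem_product hx' hy'),
            heq, hne⟩
        · rintro ⟨⟨x, x'⟩, y, y'⟩ hz ⟨⟨u, u'⟩, v, v'⟩ - h
          obtain ⟨hy, hy'⟩ := mem_product.1 (mem_product.1 (mem_coe.1 hz)).2
          obtain ⟨h, h'⟩ := Prod.mk.inj h
          obtain ⟨rfl, rfl⟩ := dilatedPair_inj (ne_zero y hy).1 (ne_zero y hy).2 h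
          obtain ⟨rfl, rfl⟩ := dilatedPair_inj (ne_zero y' hy').1 (ne_zero y' hy').2 h'
          rfl

variable {K : ℝ}

lemma card_mul_card_nontrivialQuadruples_le (hB : 0 ∉ B)
    (hK : (omegaEnergy ((A * B) ×ˢ B⁻¹) : ℝ) ≤ K * (#((A * B) ×ˢ B⁻¹) : ℝ) ^ 3) :
    (#B * #(nontrivialQuadruples A) : ℝ) ≤ K * (#(A * B) : ℝ) ^ 3 := by
  obtain rfl | hBne := B.eq_empty_or_nonempty
  · simp
  have hpos : (0 : ℝ) < (#B : ℝ) ^ 3 := by exact_mod_cast pow_pos hBne.card_pos 3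
  refine le_of_mul_le_mul_right ?_ hpos
  calc (#B * #(nontrivialQuadruples A) : ℝ) * (#B : ℝ) ^ 3
      = (#(nontrivialQuadruples A) : ℝ) * (#B : ℝ) ^ 4 := by ring
    _ ≤ (omegaEnergy ((A * B) ×ˢ B⁻¹) : ℝ) :=
        mod_cast card_nontrivialQuadruples_mul_le_omegaEnergy hB
    _ ≤ K * (#((A * B) ×ˢ B⁻¹) : ℝ) ^ 3 := hK
    _ = K * (#(A * B) : ℝ) ^ 3 * (#B : ℝ) ^ 3 := by
        rw [card_product, card_inv]
        push_cast
        ring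

lemma card_mul_addEnergy_le (hA : 0 ∉ A)
    (hK : (omegaEnergy ((A * A) ×ˢ A⁻¹) : ℝ) ≤ K * (#((A * A) ×ˢ A⁻¹) : ℝ) ^ 3) :
    (#A * E[A] : ℝ) ≤ (1 + K) * (#(A * A) : ℝ) ^ 3 := by
  have hcard : (#A : ℝ) ≤ #(A * A) := mod_cast card_le_card_mul_self₀
  calc (#A * E[A] : ℝ)
      = (#A : ℝ) ^ 3 + #A * #(nontrivialQuadruples A) := by
        rw [addEnergy_self_eq_sq_add_card_nontrivialQuadruples]
        push_cast
        ring
    _ ≤ (#(A * A) : ℝ) ^ 3 + K * (#(A * A) : ℝ) ^ 3 :=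
        add_le_add (by gcongr) (card_mul_card_nontrivialQuadruples_le hA hK)
    _ = (1 + K) * (#(A * A) : ℝ) ^ 3 := by ring

lemma card_pow_five_le_of_card_pow_four_le_mul_addEnergy {T : ℕ} (hT : #A ^ 4 ≤ T * E[A])
    (hA : 0 ∉ A)
    (hK : (omegaEnergy ((A * A) ×ˢ A⁻¹) : ℝ) ≤ K * (#((A * A) ×ˢ A⁻¹) : ℝ) ^ 3) :
    (#A : ℝ) ^ 5 ≤ (1 + K) * T * (#(A * A) : ℝ) ^ 3 :=
  calc (#A : ℝ) ^ 5 = (#A : ℝ) * (#A : ℝ) ^ 4 := by ring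
    _ ≤ (#A : ℝ) * (T * E[A]) := by
        gcongr
        exact_mod_cast hT
    _ = (T : ℝ) * (#A * E[A]) := by ring
    _ ≤ (T : ℝ) * ((1 + K) * (#(A * A) : ℝ) ^ 3) := by
        grw [card_mul_addEnergy_le hA hK]
    _ = (1 + K) * T * (#(A * A) : ℝ) ^ 3 := by ring

end OmegaEnergy

lemma ne_zero_of_mem_product_inv {α G₀ : Type*} [Zero α] [GroupWithZero G₀] [DecidableEq G₀]
    {S : Finset α} {T : Finset G₀} (hT : 0 ∉ T) {p : α × G₀} (hp : p ∈ S ×ˢ T⁻¹) : p ≠ 0 := by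
  rintro rfl
  exact hT (by simpa using (mem_product.1 hp).2)

lemma inv_mul_rpow_le_of_pow_five_le {C n N T δ : ℝ} (hC : 0 < C) (hn : 0 < n) (hN : 0 ≤ N)
    (hT : 0 ≤ T) (h : n ^ 5 ≤ C * T * N ^ 3) (hNn : N ≤ n ^ (1 + δ)) :
    C⁻¹ * n ^ (2 - 3 * δ) ≤ T := by
  rw [inv_mul_le_iff₀ hC]
  refine le_of_mul_le_mul_right ?_ (pow_pos (Real.rpow_pos_of_pos hn (1 + δ)) 3)
  calc n ^ (2 - 3 * δ) * (n ^ (1 + δ)) ^ 3 = n ^ 5 := by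
        rw [← Real.rpow_mul_natCast hn.le, ← Real.rpow_add hn, ← Real.rpow_natCast]
        congr 1
        push_cast
        ring
    _ ≤ C * T * N ^ 3 := h
    _ ≤ C * T * (n ^ (1 + δ)) ^ 3 := by gcongr

theorem stmt_17 (K : ℝ) (hK : 0 < K)
    (hyp : ∀ P : Finset (ℝ × ℝ), (∀ p ∈ P, p ≠ (0 : ℝ × ℝ)) →
      ((omegaEnergy P : ℝ) ≤ K * (P.card : ℝ) ^ 3)) :
    ∃ c : ℝ, 0 < c ∧
      ∀ (δ : ℝ) (A : Finset ℝ), 0 < δ → (0 : ℝ) ∉ A → 2 ≤ A.card →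
        (((A * A).card : ℝ) ≤ (A.card : ℝ) ^ ((1 : ℝ) + δ)) →
        c * (A.card : ℝ) ^ ((2 : ℝ) - 3 * δ) ≤ ((A + A).card : ℝ) ∧
        c * (A.card : ℝ) ^ ((2 : ℝ) - 3 * δ) ≤ ((A - A).card : ℝ) := by
  refine ⟨(1 + K)⁻¹, by positivity, fun δ A _ hA hcard hAA => ?_⟩
  have hP := hyp ((A * A) ×ˢ A⁻¹) fun _ => ne_zero_of_mem_product_inv hA
  have lower_bound {T : ℕ} (hT : #A ^ 4 ≤ T * addEnergy A A) :
      (1 + K)⁻¹ * (#A : ℝ) ^ (2 - 3 * δ) ≤ T :=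
    inv_mul_rpow_le_of_pow_five_le (by positivity) (by positivity) (by positivity) (by positivity)
      (card_pow_five_le_of_card_pow_four_le_mul_addEnergy hT hA hP) hAA
  exact ⟨lower_bound (card_pow_four_le_card_add_mul_addEnergy A),
    lower_bound (card_pow_four_le_card_sub_mul_addEnergy A)⟩
end

section
/- There exists an absolute constant C > 0 such that for every finite set P of N points in ℝ² and every nonzero real number t, the number of pairs (q,q') ∈ P × P with ω(q,q') = t is at most C·N^(4/3). -/
open Finset
open scoped Classical

/-!
For `t ≠ 0` and `q ≠ 0` the set `{x | ω(q, x) = t}` is a line, and distinct `q` give distinct lines,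
so the pairs to be counted are incidences between `N` points and at most `N` lines. A symplectic
shear makes all abscissas distinct, and the Szemerédi–Trotter theorem gives the bound.

For Szemerédi–Trotter, join the points of `P` that are consecutive on a line of `L`. This gives at
least `I(P, L) - |L|` edges, with at most one crossing for each pair of lines. In a drawing without
crossings each edge is the topmost one at its left endpoint, or the topmost one at its right
endpoint, or the first edge below some vertex, and each vertex accounts for at most one edge of each
kind; hence `|E| ≤ 3 |V|`. Deleting one edge per crossing and averaging over random induced
subgraphs turns this into the crossing inequality.
-/

section BernoulliMean

variable {V ι : Type*} {p : ℝ} {P : Finset V}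

/-- The expectation of `F` at a random subset of `P` containing each element independently with
probability `p`. -/
def bernoulliMean (p : ℝ) (P : Finset V) (F : Finset V → ℝ) : ℝ :=
  ∑ S ∈ P.powerset, p ^ #S * (1 - p) ^ (#P - #S) * F S

theorem bernoulliMean_mono (hp₀ : 0 ≤ p) (hp₁ : p ≤ 1) {F G : Finset V → ℝ}
    (h : ∀ S ⊆ P, F S ≤ G S) : bernoulliMean p P F ≤ bernoulliMean p P G := by
  have : 0 ≤ 1 - p := sub_nonneg.2 hp₁
  exact sum_le_sum fun S hS => mul_le_mul_of_nonneg_left (h S (mem_powerset.1 hS)) (by positivity)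

theorem bernoulliMean_add (F G : Finset V → ℝ) :
    bernoulliMean p P (fun S => F S + G S) = bernoulliMean p P F + bernoulliMean p P G := by
  simp only [bernoulliMean, mul_add, sum_add_distrib]

theorem bernoulliMean_const_mul (c : ℝ) (F : Finset V → ℝ) :
    bernoulliMean p P (fun S => c * F S) = c * bernoulliMean p P F := by
  simp only [bernoulliMean, mul_left_comm _ c, mul_sum]

theorem bernoulliMean_subset [DecidableEq V] {A : Finset V} (hA : A ⊆ P) :
    bernoulliMean p P (fun S => if A ⊆ S then 1 else 0) = p ^ #A := by
  calc bernoulliMean p P (fun S => if A ⊆ S then 1 else 0)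
      = ∑ S ∈ P.powerset, (∏ _i ∈ S, p) * ∏ i ∈ P \ S, if i ∈ A then 0 else 1 - p := by
        refine sum_congr rfl fun S hS => ?_
        have hSP := mem_powerset.1 hS
        dsimp only
        rw [prod_const, mul_assoc]
        congr 1
        by_cases hAS : A ⊆ S
        · rw [if_pos hAS, mul_one, ← card_sdiff_of_subset hSP, ← prod_const]
          exact prod_congr rfl fun i hi => (if_neg fun hiA => (mem_sdiff.1 hi).2 (hAS hiA)).symm
        · obtain ⟨i, hiA, hiS⟩ := not_subset.1 hAS
          rw [if_neg hAS, mul_zero]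
          exact (prod_eq_zero (M₀ := ℝ) (mem_sdiff.2 ⟨hA hiA, hiS⟩) (if_pos hiA)).symm
    _ = ∏ i ∈ P, (p + if i ∈ A then 0 else 1 - p) := (prod_add _ _ _).symm
    _ = ∏ i ∈ P, if i ∈ A then p else 1 := by
        refine prod_congr rfl fun i _ => ?_
        split_ifs <;> ring
    _ = p ^ #A := by
        rw [prod_ite_mem, inter_eq_right.2 hA, prod_const]

theorem bernoulliMean_card_filter_subset [DecidableEq V] (I : Finset ι) (A : ι → Finset V) {k : ℕ}
    (hAP : ∀ i ∈ I, A i ⊆ P) (hcard : ∀ i ∈ I, #(A i) = k) :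
    bernoulliMean p P (fun S => (#{i ∈ I | A i ⊆ S} : ℝ)) = p ^ k * #I := by
  calc bernoulliMean p P (fun S => (#{i ∈ I | A i ⊆ S} : ℝ))
      = ∑ i ∈ I, bernoulliMean p P (fun S => if A i ⊆ S then 1 else 0) := by
        simp only [bernoulliMean, natCast_card_filter, mul_sum]
        exact sum_comm
    _ = ∑ _i ∈ I, p ^ k := sum_congr rfl fun i hi => by
        rw [bernoulliMean_subset (hAP i hi), hcard i hi]
    _ = p ^ k * #I := by rw [sum_const, nsmul_eq_mul, mul_comm]

theorem bernoulliMean_card (p : ℝ) (P : Finset V) :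
    bernoulliMean p P (fun S => (#S : ℝ)) = p * #P := by
  rw [← pow_one p, ← bernoulliMean_card_filter_subset P (fun v => {v})
    (fun v hv => singleton_subset_iff.2 hv) fun v _ => card_singleton v, pow_one]
  refine sum_congr rfl fun S hS => ?_
  simp only [singleton_subset_iff, filter_mem_eq_inter, inter_eq_right.2 (mem_powerset.1 hS)]

end BernoulliMean

section Incidences

variable {𝕜 : Type*} [Field 𝕜]

/-- The line `y = slope * x + intercept` in the plane `𝕜 × 𝕜`. -/
@[ext]
structure NonverticalLine (𝕜 : Type*) where
  slope : 𝕜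
  intercept : 𝕜

/-- A segment in the plane, given by its endpoints, the left one first. -/
abbrev Edge (𝕜 : Type*) : Type _ := (𝕜 × 𝕜) × (𝕜 × 𝕜)

namespace NonverticalLine

/-- The ordinate of the point of `ℓ` with abscissa `x`. -/
def eval (ℓ : NonverticalLine 𝕜) (x : 𝕜) : 𝕜 := ℓ.slope * x + ℓ.intercept

theorem eval_sub_eval (ℓ : NonverticalLine 𝕜) (x y : 𝕜) :
    ℓ.eval x - ℓ.eval y = ℓ.slope * (x - y) := by
  simp only [eval]; ring

theorem eq_of_slope_eq_of_eval_eq {ℓ ℓ' : NonverticalLine 𝕜} {x : 𝕜}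
    (hslope : ℓ.slope = ℓ'.slope) (hx : ℓ.eval x = ℓ'.eval x) : ℓ = ℓ' := by
  simp only [eval, hslope, add_right_inj] at hx
  exact NonverticalLine.ext hslope hx

theorem eq_of_eval_eq_of_eval_eq {ℓ ℓ' : NonverticalLine 𝕜} {x y : 𝕜} (hxy : x ≠ y)
    (hx : ℓ.eval x = ℓ'.eval x) (hy : ℓ.eval y = ℓ'.eval y) : ℓ = ℓ' := by
  refine eq_of_slope_eq_of_eval_eq (mul_right_cancel₀ (sub_ne_zero.2 hxy) ?_) hx
  rw [← eval_sub_eval, ← eval_sub_eval, hx, hy]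

variable [LinearOrder 𝕜] [IsStrictOrderedRing 𝕜]

theorem eval_lt_eval_iff_of_right {ℓ ℓ' : NonverticalLine 𝕜} {x y : 𝕜}
    (hx : ℓ.eval x = ℓ'.eval x) (hxy : x < y) :
    ℓ.eval y < ℓ'.eval y ↔ ℓ.slope < ℓ'.slope := by
  rw [← sub_lt_sub_iff_right (ℓ.eval x), eval_sub_eval, hx, eval_sub_eval,
    mul_lt_mul_iff_left₀ (sub_pos.2 hxy)]

theorem eval_lt_eval_iff_of_left {ℓ ℓ' : NonverticalLine 𝕜} {x y : 𝕜}
    (hx : ℓ.eval x = ℓ'.eval x) (hyx : y < x) :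
    ℓ.eval y < ℓ'.eval y ↔ ℓ'.slope < ℓ.slope := by
  rw [← sub_lt_sub_iff_right (ℓ.eval x), eval_sub_eval, hx, eval_sub_eval,
    mul_lt_mul_right_of_neg (sub_neg.2 hyx)]

theorem slope_lt_slope_of_eval_lt_of_lt_eval {ℓ ℓ' : NonverticalLine 𝕜} {x y : 𝕜} (hxy : x ≤ y)
    (hx : ℓ'.eval x < ℓ.eval x) (hy : ℓ.eval y < ℓ'.eval y) : ℓ.slope < ℓ'.slope := by
  refine lt_of_mul_lt_mul_right ?_ (sub_nonneg.2 hxy)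
  rw [← eval_sub_eval, ← eval_sub_eval]
  exact sub_lt_sub hy hx

end NonverticalLine

open NonverticalLine

/-- The line through the endpoints of `e`. If these have the same abscissa, division by zero makes
it the horizontal line through `e.1`. -/
def supportLine (e : Edge 𝕜) : NonverticalLine 𝕜 where
  slope := (e.2.2 - e.1.2) / (e.2.1 - e.1.1)
  intercept := e.1.2 - (e.2.2 - e.1.2) / (e.2.1 - e.1.1) * e.1.1

theorem supportLine_eval_left (e : Edge 𝕜) : (supportLine e).eval e.1.1 = e.1.2 := by
  simp [supportLine, eval]

theorem supportLine_eval_right {e : Edge 𝕜} (he : e.1.1 ≠ e.2.1) :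
    (supportLine e).eval e.2.1 = e.2.2 := by
  have := sub_ne_zero.2 he.symm
  simp only [supportLine, eval]
  field_simp
  ring

variable [LinearOrder 𝕜]

/-- Over some abscissa common to both edges, `e` lies strictly below `f`. -/
def PassesBelow (e f : Edge 𝕜) : Prop :=
  ∃ x ∈ Set.Icc e.1.1 e.2.1 ∩ Set.Icc f.1.1 f.2.1, (supportLine e).eval x < (supportLine f).eval x

/-- Each of the edges passes below the other, so they cross at a point interior to both. -/
def Crosses (e f : Edge 𝕜) : Prop := PassesBelow e f ∧ PassesBelow f e

theorem Crosses.symm {e f : Edge 𝕜} (h : Crosses e f) : Crosses f e := And.symm h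

theorem Crosses.left_ne_right {e f : Edge 𝕜} (h : Crosses e f) : e.1 ≠ f.2 := by
  rintro hef
  obtain ⟨⟨x, ⟨hxe, hxf⟩, hx⟩, ⟨y, ⟨hyf, hye⟩, hy⟩⟩ := h
  rw [← hef] at hxf hyf
  obtain rfl : x = y := (hxf.2.antisymm hxe.1).trans (hye.1.antisymm hyf.2)
  exact hx.asymm hy

theorem PassesBelow.eval_le_eval {e f : Edge 𝕜} (hef : PassesBelow e f) (h : ¬ Crosses e f) {x : 𝕜}
    (hxe : x ∈ Set.Icc e.1.1 e.2.1) (hxf : x ∈ Set.Icc f.1.1 f.2.1) :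
    (supportLine e).eval x ≤ (supportLine f).eval x :=
  not_lt.1 fun hlt => h ⟨hef, x, ⟨hxf, hxe⟩, hlt⟩

/-- The ordered pairs of crossing edges; each crossing is counted twice. -/
noncomputable def crossings (E : Finset (Edge 𝕜)) : Finset (Edge 𝕜 × Edge 𝕜) :=
  {x ∈ E ×ˢ E | Crosses x.1 x.2}

theorem mem_crossings {E : Finset (Edge 𝕜)} {x : Edge 𝕜 × Edge 𝕜} :
    x ∈ crossings E ↔ x.1 ∈ E ∧ x.2 ∈ E ∧ Crosses x.1 x.2 := by
  simp only [crossings, mem_filter, mem_product, and_assoc]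

/-- The endpoints of an edge, as a set of vertices. -/
def endpoints (e : Edge 𝕜) : Finset (𝕜 × 𝕜) := {e.1, e.2}

/-- `E` is the edge set of a straight-line drawing with vertex set `S`: no two vertices have the
same abscissa and no edge passes through a vertex other than its endpoints. Edges may cross. -/
structure IsGeometricGraph (S : Finset (𝕜 × 𝕜)) (E : Finset (Edge 𝕜)) : Prop where
  injOn_fst : Set.InjOn Prod.fst (S : Set (𝕜 × 𝕜))
  left_mem : ∀ e ∈ E, e.1 ∈ S
  right_mem : ∀ e ∈ E, e.2 ∈ S
  left_lt_right : ∀ e ∈ E, e.1.1 < e.2.1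
  eval_ne : ∀ e ∈ E, ∀ c ∈ S, e.1.1 < c.1 → c.1 < e.2.1 → (supportLine e).eval c.1 ≠ c.2

/-- No edge of `E` leaves the left endpoint of `e` above `e`. -/
def IsTopAtLeft (E : Finset (Edge 𝕜)) (e : Edge 𝕜) : Prop :=
  ∀ f ∈ E, f.1 = e.1 → (supportLine f).slope ≤ (supportLine e).slope

/-- No edge of `E` reaches the right endpoint of `e` from above `e`. -/
def IsTopAtRight (E : Finset (Edge 𝕜)) (e : Edge 𝕜) : Prop :=
  ∀ f ∈ E, f.2 = e.2 → (supportLine e).slope ≤ (supportLine f).slope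

/-- Going down vertically from `v`, the edge `e` is the first edge of `E` that is hit in its
interior. -/
structure IsDirectlyBelow (E : Finset (Edge 𝕜)) (e : Edge 𝕜) (v : 𝕜 × 𝕜) : Prop where
  left_lt : e.1.1 < v.1
  lt_right : v.1 < e.2.1
  eval_lt : (supportLine e).eval v.1 < v.2
  eval_le : ∀ f ∈ E, f.1.1 < v.1 → v.1 < f.2.1 → (supportLine f).eval v.1 < v.2 →
    (supportLine f).eval v.1 ≤ (supportLine e).eval v.1

/-- The edges `e` and `g` leave their common left endpoint consecutively, `g` above `e`, both reach
the abscissa `x`, and no vertex to the left of `x` lies in the wedge between them. -/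
structure IsEmptyWedge (S : Finset (𝕜 × 𝕜)) (E : Finset (Edge 𝕜)) (e g : Edge 𝕜) (x : 𝕜) :
    Prop where
  left_eq : g.1 = e.1
  slope_lt : (supportLine e).slope < (supportLine g).slope
  next : ∀ f ∈ E, f.1 = e.1 → (supportLine e).slope < (supportLine f).slope →
    (supportLine g).slope ≤ (supportLine f).slope
  le_right : x ≤ e.2.1
  le_right' : x ≤ g.2.1
  empty : ∀ c ∈ S, e.1.1 < c.1 → c.1 < x → (supportLine e).eval c.1 ≤ c.2 →
    ¬ c.2 ≤ (supportLine g).eval c.1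

theorem IsEmptyWedge.eval_apex {S : Finset (𝕜 × 𝕜)} {E : Finset (Edge 𝕜)} {e g : Edge 𝕜} {x : 𝕜}
    (hw : IsEmptyWedge S E e g x) :
    (supportLine e).eval e.1.1 = (supportLine g).eval e.1.1 := by
  rw [supportLine_eval_left, ← hw.left_eq, supportLine_eval_left]

theorem exists_next_of_not_isTopAtLeft {E : Finset (Edge 𝕜)} {e : Edge 𝕜}
    (hleft : ¬ IsTopAtLeft E e) :
    ∃ g ∈ E, g.1 = e.1 ∧ (supportLine e).slope < (supportLine g).slope ∧
      ∀ f ∈ E, f.1 = e.1 → (supportLine e).slope < (supportLine f).slope →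
        (supportLine g).slope ≤ (supportLine f).slope := by
  simp only [IsTopAtLeft, not_forall, not_le] at hleft
  obtain ⟨f, hf, hfe, hslope⟩ := hleft
  obtain ⟨g, hg, hmin⟩ := exists_min_image
    {f ∈ E | f.1 = e.1 ∧ (supportLine e).slope < (supportLine f).slope}
    (fun f => (supportLine f).slope) ⟨f, mem_filter.2 ⟨hf, hfe, hslope⟩⟩
  simp only [mem_filter] at hg hmin
  exact ⟨g, hg.1, hg.2.1, hg.2.2, fun f hf hfe hlt => hmin f ⟨hf, hfe, hlt⟩⟩

namespace IsGeometricGraph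

variable {S : Finset (𝕜 × 𝕜)} {E : Finset (Edge 𝕜)} {e f g : Edge 𝕜}

theorem mono (h : IsGeometricGraph S E) {S' : Finset (𝕜 × 𝕜)} {E' : Finset (Edge 𝕜)}
    (hS : S' ⊆ S) (hE : E' ⊆ E) (hmem : ∀ e ∈ E', e.1 ∈ S' ∧ e.2 ∈ S') :
    IsGeometricGraph S' E' where
  injOn_fst := h.injOn_fst.mono hS
  left_mem e he := (hmem e he).1
  right_mem e he := (hmem e he).2
  left_lt_right e he := h.left_lt_right e (hE he)
  eval_ne e he c hc := h.eval_ne e (hE he) c (hS hc)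

theorem eval_right (h : IsGeometricGraph S E) (he : e ∈ E) :
    (supportLine e).eval e.2.1 = e.2.2 :=
  supportLine_eval_right (h.left_lt_right e he).ne

theorem card_endpoints (h : IsGeometricGraph S E) (he : e ∈ E) : #(endpoints e) = 2 :=
  card_pair fun heq => (h.left_lt_right e he).ne (congrArg Prod.fst heq)

theorem endpoints_subset (h : IsGeometricGraph S E) (he : e ∈ E) : endpoints e ⊆ S :=
  insert_subset (h.left_mem e he) (singleton_subset_iff.2 (h.right_mem e he))

theorem eq_of_supportLine_eq (h : IsGeometricGraph S E) (he : e ∈ E) (hf : f ∈ E)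
    (hline : supportLine e = supportLine f) (hef : e.1.1 < f.2.1) (hfe : f.1.1 < e.2.1) :
    e = f := by
  have left_le : ∀ {e f : Edge 𝕜}, e ∈ E → f ∈ E → supportLine e = supportLine f →
      f.1.1 < e.2.1 → f.1.1 ≤ e.1.1 := fun {e f} he hf hline hfe => not_lt.1 fun hlt =>
    h.eval_ne e he f.1 (h.left_mem f hf) hlt hfe (hline ▸ supportLine_eval_left f)
  have right_le : ∀ {e f : Edge 𝕜}, e ∈ E → f ∈ E → supportLine e = supportLine f →
      e.1.1 < f.2.1 → e.2.1 ≤ f.2.1 := fun {e f} he hf hline hef => not_lt.1 fun hlt =>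
    h.eval_ne e he f.2 (h.right_mem f hf) hef hlt (hline ▸ h.eval_right hf)
  exact Prod.ext
    (h.injOn_fst (h.left_mem e he) (h.left_mem f hf)
      (le_antisymm (left_le hf he hline.symm hef) (left_le he hf hline hfe)))
    (h.injOn_fst (h.right_mem e he) (h.right_mem f hf)
      (le_antisymm (right_le he hf hline hef) (right_le hf he hline.symm hfe)))

theorem eq_of_isTopAtLeft (h : IsGeometricGraph S E) (he : e ∈ E) (hf : f ∈ E) (hef : e.1 = f.1)
    (hetop : IsTopAtLeft E e) (hftop : IsTopAtLeft E f) : e = f := by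
  refine h.eq_of_supportLine_eq he hf
    (eq_of_slope_eq_of_eval_eq (x := e.1.1)
      (le_antisymm (hftop e he hef) (hetop f hf hef.symm)) ?_)
    (hef ▸ h.left_lt_right f hf) (hef ▸ h.left_lt_right e he)
  rw [supportLine_eval_left, hef, supportLine_eval_left]

theorem eq_of_isTopAtRight (h : IsGeometricGraph S E) (he : e ∈ E) (hf : f ∈ E) (hef : e.2 = f.2)
    (hetop : IsTopAtRight E e) (hftop : IsTopAtRight E f) : e = f := by
  refine h.eq_of_supportLine_eq he hf
    (eq_of_slope_eq_of_eval_eq (x := e.2.1)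
      (le_antisymm (hetop f hf hef.symm) (hftop e he hef)) ?_)
    (hef ▸ h.left_lt_right e he) (hef ▸ h.left_lt_right f hf)
  rw [h.eval_right he, hef, h.eval_right hf]

end IsGeometricGraph

section CrossingLemma

variable [IsStrictOrderedRing 𝕜]

theorem crosses_of_eval_eq_of_slope_lt {e f : Edge 𝕜} {x : 𝕜} (hex : x ∈ Set.Ioo e.1.1 e.2.1)
    (hfx : x ∈ Set.Ioo f.1.1 f.2.1) (hx : (supportLine e).eval x = (supportLine f).eval x)
    (hslope : (supportLine e).slope < (supportLine f).slope) : Crosses e f := by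
  have hr : x < min e.2.1 f.2.1 := lt_min hex.2 hfx.2
  have hl : max e.1.1 f.1.1 < x := max_lt hex.1 hfx.1
  refine ⟨⟨min e.2.1 f.2.1, ⟨⟨?_, min_le_left _ _⟩, ?_, min_le_right _ _⟩,
      (eval_lt_eval_iff_of_right hx hr).2 hslope⟩,
    ⟨max e.1.1 f.1.1, ⟨⟨le_max_right _ _, ?_⟩, le_max_left _ _, ?_⟩,
      (eval_lt_eval_iff_of_left hx.symm hl).2 hslope⟩⟩
  · exact (hex.1.trans hr).le
  · exact (hfx.1.trans hr).le
  · exact (hl.trans hfx.2).le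
  · exact (hl.trans hex.2).le

namespace IsGeometricGraph

variable {S : Finset (𝕜 × 𝕜)} {E : Finset (Edge 𝕜)} {e f g : Edge 𝕜}

theorem eq_of_isDirectlyBelow (h : IsGeometricGraph S E)
    (hcross : ∀ e ∈ E, ∀ f ∈ E, ¬ Crosses e f) (he : e ∈ E) (hf : f ∈ E) {v : 𝕜 × 𝕜}
    (hev : IsDirectlyBelow E e v) (hfv : IsDirectlyBelow E f v) : e = f := by
  have hex : v.1 ∈ Set.Ioo e.1.1 e.2.1 := ⟨hev.left_lt, hev.lt_right⟩
  have hfx : v.1 ∈ Set.Ioo f.1.1 f.2.1 := ⟨hfv.left_lt, hfv.lt_right⟩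
  have heval : (supportLine e).eval v.1 = (supportLine f).eval v.1 :=
    le_antisymm (hfv.eval_le e he hex.1 hex.2 hev.eval_lt)
      (hev.eval_le f hf hfx.1 hfx.2 hfv.eval_lt)
  have hslope : (supportLine e).slope = (supportLine f).slope := by
    rcases lt_trichotomy (supportLine e).slope (supportLine f).slope with hlt | heq | hgt
    · exact absurd (crosses_of_eval_eq_of_slope_lt hex hfx heval hlt) (hcross e he f hf)
    · exact heq
    · exact absurd (crosses_of_eval_eq_of_slope_lt hfx hex heval.symm hgt) (hcross f hf e he)
  exact h.eq_of_supportLine_eq he hf (eq_of_slope_eq_of_eval_eq hslope heval)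
    (hex.1.trans hfx.2) (hfx.1.trans hex.2)

/-- Followed to the left, an edge `f` inside the wedge can neither leave the wedge nor end in it, so
it starts at the apex, contradicting that `e` and `g` are consecutive there. -/
theorem not_passesBelow_of_isEmptyWedge (h : IsGeometricGraph S E)
    (hcross : ∀ e ∈ E, ∀ f ∈ E, ¬ Crosses e f) (he : e ∈ E) (hg : g ∈ E) (hf : f ∈ E) {x : 𝕜}
    (hw : IsEmptyWedge S E e g x) (hfx : f.1.1 < x) (hef : PassesBelow e f) :
    ¬ PassesBelow f g := by
  intro hfg
  have le_of_above_e {y : 𝕜} := hef.eval_le_eval (hcross e he f hf) (x := y)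
  have le_of_below_g {y : 𝕜} := hfg.eval_le_eval (hcross f hf g hg) (x := y)
  rw [hw.left_eq] at le_of_below_g
  rcases lt_or_ge e.1.1 f.1.1 with hlt | hle
  · have hf_left : f.1.1 ∈ Set.Icc f.1.1 f.2.1 := ⟨le_rfl, (h.left_lt_right f hf).le⟩
    refine hw.empty f.1 (h.left_mem f hf) hlt hfx ?_ ?_ <;> rw [← supportLine_eval_left f]
    · exact le_of_above_e ⟨hlt.le, (hfx.trans_le hw.le_right).le⟩ hf_left
    · exact le_of_below_g hf_left ⟨hlt.le, (hfx.trans_le hw.le_right').le⟩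
  · obtain ⟨y, ⟨hye, hyf⟩, hy⟩ := hef
    obtain ⟨z, ⟨-, hzg⟩, hz⟩ := hfg
    rw [hw.left_eq] at hzg
    have hapex : e.1.1 ∈ Set.Icc f.1.1 f.2.1 := ⟨hle, hye.1.trans hyf.2⟩
    have hapex_ef : (supportLine e).eval e.1.1 = (supportLine f).eval e.1.1 :=
      le_antisymm (le_of_above_e ⟨le_rfl, hye.1.trans hye.2⟩ hapex)
        ((le_of_below_g hapex ⟨le_rfl, hzg.1.trans hzg.2⟩).trans_eq hw.eval_apex.symm)
    have hapex_fg : (supportLine f).eval e.1.1 = (supportLine g).eval e.1.1 :=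
      hapex_ef.symm.trans hw.eval_apex
    have hylt : e.1.1 < y := hye.1.lt_of_ne fun heq => (heq ▸ hy).ne hapex_ef
    have hzlt : e.1.1 < z := hzg.1.lt_of_ne fun heq => (heq ▸ hz).ne hapex_fg
    have hfe : f.1 = e.1 := by
      refine h.injOn_fst (h.left_mem f hf) (h.left_mem e he) (hle.eq_of_not_lt fun hlt => ?_)
      exact h.eval_ne f hf e.1 (h.left_mem e he) hlt (hylt.trans_le hyf.2)
        (hapex_ef.symm.trans (supportLine_eval_left e))
    exact ((eval_lt_eval_iff_of_right hapex_fg hzlt).1 hz).not_ge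
      (hw.next f hf hfe ((eval_lt_eval_iff_of_right hapex_ef hylt).1 hy))

theorem exists_isEmptyWedge (h : IsGeometricGraph S E) (he : e ∈ E)
    (hleft : ¬ IsTopAtLeft E e) :
    ∃ g ∈ E, ∃ v ∈ S, IsEmptyWedge S E e g v.1 ∧ e.1.1 < v.1 ∧
      (supportLine e).eval v.1 ≤ v.2 ∧ v.2 ≤ (supportLine g).eval v.1 := by
  obtain ⟨g, hg, hge, hslope, hnext⟩ := exists_next_of_not_isTopAtLeft hleft
  have hlt_e := h.left_lt_right e he
  have hlt_g : e.1.1 < g.2.1 := hge ▸ h.left_lt_right g hg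
  have hapex : (supportLine e).eval e.1.1 = (supportLine g).eval e.1.1 := by
    rw [supportLine_eval_left, ← hge, supportLine_eval_left]
  have he_lt_g {x : 𝕜} (hx : e.1.1 < x) : (supportLine e).eval x < (supportLine g).eval x :=
    (eval_lt_eval_iff_of_right hapex hx).2 hslope
  let W : Finset (𝕜 × 𝕜) := {c ∈ S | e.1.1 < c.1 ∧ c.1 ≤ e.2.1 ∧ c.1 ≤ g.2.1 ∧
    (supportLine e).eval c.1 ≤ c.2 ∧ c.2 ≤ (supportLine g).eval c.1}
  have hW : W.Nonempty := by
    rcases le_total e.2.1 g.2.1 with hle | hle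
    · refine ⟨e.2, mem_filter.2 ⟨h.right_mem e he, hlt_e, le_rfl, hle, ?_⟩⟩
      rw [← h.eval_right he]
      exact ⟨le_rfl, (he_lt_g hlt_e).le⟩
    · refine ⟨g.2, mem_filter.2 ⟨h.right_mem g hg, hlt_g, hle, le_rfl, ?_⟩⟩
      rw [← h.eval_right hg]
      exact ⟨(he_lt_g hlt_g).le, le_rfl⟩
  obtain ⟨v, hv, hmin⟩ := exists_min_image W Prod.fst hW
  obtain ⟨hvS, hlv, hve, hvg, hev, hgv⟩ := mem_filter.1 hv
  refine ⟨g, hg, v, hvS, ⟨hge, hslope, hnext, hve, hvg, fun c hc hlc hcv hec hcg => ?_⟩,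
    hlv, hev, hgv⟩
  exact hcv.not_ge (hmin c (mem_filter.2 ⟨hc, hlc, hcv.le.trans hve, hcv.le.trans hvg, hec, hcg⟩))

theorem isTopAtRight_of_isEmptyWedge (h : IsGeometricGraph S E)
    (hcross : ∀ e ∈ E, ∀ f ∈ E, ¬ Crosses e f) (he : e ∈ E) (hg : g ∈ E)
    (hw : IsEmptyWedge S E e g e.2.1) : IsTopAtRight E e := by
  intro f hf hfe
  by_contra! hslope
  have hmeet : (supportLine e).eval e.2.1 = (supportLine f).eval e.2.1 := by
    rw [h.eval_right he, ← hfe, h.eval_right hf]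
  have hlt_e := h.left_lt_right e he
  have hlt_f : f.1.1 < e.2.1 := hfe ▸ h.left_lt_right f hf
  have hmax : max e.1.1 f.1.1 < e.2.1 := max_lt hlt_e hlt_f
  refine h.not_passesBelow_of_isEmptyWedge hcross he hg hf hw hlt_f ?_ ?_
  · exact ⟨max e.1.1 f.1.1, ⟨⟨le_max_left _ _, hmax.le⟩, le_max_right _ _, hfe ▸ hmax.le⟩,
      (eval_lt_eval_iff_of_left hmeet hmax).2 hslope⟩
  · refine ⟨e.2.1, ⟨⟨hlt_f.le, hfe ▸ le_rfl⟩, hw.left_eq ▸ hlt_e.le, hw.le_right'⟩, ?_⟩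
    rw [← hmeet]
    exact (eval_lt_eval_iff_of_right hw.eval_apex hlt_e).2 hw.slope_lt

theorem exists_isDirectlyBelow (h : IsGeometricGraph S E)
    (hcross : ∀ e ∈ E, ∀ f ∈ E, ¬ Crosses e f) (he : e ∈ E)
    (hleft : ¬ IsTopAtLeft E e) (hright : ¬ IsTopAtRight E e) :
    ∃ v ∈ S, IsDirectlyBelow E e v := by
  obtain ⟨g, hg, v, hvS, hw, hlv, hev, hvg⟩ := h.exists_isEmptyWedge he hleft
  have hve : v.1 < e.2.1 := hw.le_right.lt_of_ne fun heq =>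
    hright (h.isTopAtRight_of_isEmptyWedge hcross he hg (heq ▸ hw))
  refine ⟨v, hvS, hlv, hve, hev.lt_of_ne (h.eval_ne e he v hvS hlv hve), fun f hf hfv hvf hlt => ?_⟩
  by_contra! hef
  have hv_f : v.1 ∈ Set.Icc f.1.1 f.2.1 := ⟨hfv.le, hvf.le⟩
  refine h.not_passesBelow_of_isEmptyWedge hcross he hg hf hw hfv ?_ ?_
  · exact ⟨v.1, ⟨⟨hlv.le, hve.le⟩, hv_f⟩, hef⟩
  · exact ⟨v.1, ⟨hv_f, hw.left_eq ▸ hlv.le, hw.le_right'⟩, hlt.trans_le hvg⟩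

theorem card_le_three_mul_card (h : IsGeometricGraph S E)
    (hcross : ∀ e ∈ E, ∀ f ∈ E, ¬ Crosses e f) : #E ≤ 3 * #S := by
  have hL : #{e ∈ E | IsTopAtLeft E e} ≤ #S := by
    refine card_le_card_of_injOn Prod.fst (fun e he => h.left_mem e (mem_filter.1 he).1) ?_
    intro e he f hf hef
    rw [mem_coe, mem_filter] at he hf
    exact h.eq_of_isTopAtLeft he.1 hf.1 hef he.2 hf.2
  have hR : #{e ∈ E | IsTopAtRight E e} ≤ #S := by
    refine card_le_card_of_injOn Prod.snd (fun e he => h.right_mem e (mem_filter.1 he).1) ?_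
    intro e he f hf hef
    rw [mem_coe, mem_filter] at he hf
    exact h.eq_of_isTopAtRight he.1 hf.1 hef he.2 hf.2
  have hB : #{e ∈ E | ∃ v ∈ S, IsDirectlyBelow E e v} ≤ #S :=
    card_le_card_of_forall_subsingleton (IsDirectlyBelow E) (fun e he => (mem_filter.1 he).2)
      fun v _ e he f hf => h.eq_of_isDirectlyBelow hcross (mem_filter.1 he.1).1
        (mem_filter.1 hf.1).1 he.2 hf.2
  have hcover : E ⊆ {e ∈ E | IsTopAtLeft E e} ∪ {e ∈ E | IsTopAtRight E e} ∪
      {e ∈ E | ∃ v ∈ S, IsDirectlyBelow E e v} := by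
    intro e he
    have := h.exists_isDirectlyBelow hcross he
    simp only [mem_union, mem_filter]
    tauto
  calc #E ≤ _ := card_le_card hcover
    _ ≤ #{e ∈ E | IsTopAtLeft E e} + #{e ∈ E | IsTopAtRight E e} +
        #{e ∈ E | ∃ v ∈ S, IsDirectlyBelow E e v} :=
      (card_union_le _ _).trans (Nat.add_le_add_right (card_union_le _ _) _)
    _ ≤ 3 * #S := by omega

end IsGeometricGraph

section Crosses

variable {e f e' f' : Edge 𝕜}

theorem PassesBelow.slope_lt_of_left_eq (h : PassesBelow e f) (hef : e.1 = f.1) :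
    (supportLine e).slope < (supportLine f).slope := by
  obtain ⟨x, ⟨hxe, -⟩, hx⟩ := h
  have hmeet : (supportLine e).eval e.1.1 = (supportLine f).eval e.1.1 := by
    rw [supportLine_eval_left, hef, supportLine_eval_left]
  exact (eval_lt_eval_iff_of_right hmeet (hxe.1.lt_of_ne fun heq => (heq ▸ hx).ne hmeet)).1 hx

theorem PassesBelow.slope_lt_of_right_eq (h : PassesBelow e f) (he : e.1.1 ≠ e.2.1)
    (hf : f.1.1 ≠ f.2.1) (hef : e.2 = f.2) :
    (supportLine f).slope < (supportLine e).slope := by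
  obtain ⟨x, ⟨hxe, -⟩, hx⟩ := h
  have hmeet : (supportLine e).eval e.2.1 = (supportLine f).eval e.2.1 := by
    rw [supportLine_eval_right he, hef, supportLine_eval_right hf]
  exact (eval_lt_eval_iff_of_left hmeet (hxe.2.lt_of_ne fun heq => (heq ▸ hx).ne hmeet)).1 hx

theorem Crosses.disjoint_endpoints (h : Crosses e f) (he : e.1.1 ≠ e.2.1) (hf : f.1.1 ≠ f.2.1) :
    Disjoint (endpoints e) (endpoints f) := by
  have left_ne_left : e.1 ≠ f.1 := fun hef =>
    (h.1.slope_lt_of_left_eq hef).asymm (h.2.slope_lt_of_left_eq hef.symm)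
  have right_ne_right : e.2 ≠ f.2 := fun hef =>
    (h.1.slope_lt_of_right_eq he hf hef).asymm (h.2.slope_lt_of_right_eq hf he hef.symm)
  simp [endpoints, left_ne_left.symm, right_ne_right.symm, h.left_ne_right.symm,
    h.symm.left_ne_right]

/-- The two lines meet only once, so the edges `e` and `e'` of the first line overlap. -/
theorem Crosses.left_lt_right_of_supportLine_eq (h : Crosses e f) (h' : Crosses e' f')
    (he : supportLine e = supportLine e') (hf : supportLine f = supportLine f') :
    e'.1.1 < e.2.1 := by
  by_contra! hle
  obtain ⟨⟨x, ⟨hxe, -⟩, hx⟩, ⟨y, ⟨-, hye⟩, hy⟩⟩ := h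
  obtain ⟨⟨x', ⟨hxe', -⟩, hx'⟩, ⟨y', ⟨-, hye'⟩, hy'⟩⟩ := h'
  rw [← he, ← hf] at hx' hy'
  exact (slope_lt_slope_of_eval_lt_of_lt_eval ((hxe.2.trans hle).trans hye'.1) hx hy').asymm
    (slope_lt_slope_of_eval_lt_of_lt_eval ((hye.2.trans hle).trans hxe'.1) hy hx')

end Crosses

namespace IsGeometricGraph

variable {S P : Finset (𝕜 × 𝕜)} {E : Finset (Edge 𝕜)} {e f : Edge 𝕜}

theorem card_le_three_mul_card_add_crossings (h : IsGeometricGraph S E) :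
    #E ≤ 3 * #S + #(crossings E) := by
  have hplane := (h.mono Subset.rfl (sdiff_subset (t := (crossings E).image Prod.fst))
    fun e he => ⟨h.left_mem e (mem_sdiff.1 he).1, h.right_mem e (mem_sdiff.1 he).1⟩)
      |>.card_le_three_mul_card fun e he f hf hc => (mem_sdiff.1 he).2 <| mem_image.2
        ⟨(e, f), mem_crossings.2 ⟨(mem_sdiff.1 he).1, (mem_sdiff.1 hf).1, hc⟩, rfl⟩
  have hsdiff := le_card_sdiff ((crossings E).image Prod.fst) E
  have himage : #((crossings E).image Prod.fst) ≤ #(crossings E) := card_image_le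
  omega

theorem card_induced_le (h : IsGeometricGraph P E) (hS : S ⊆ P) :
    #{e ∈ E | endpoints e ⊆ S} ≤
      3 * #S + #{x ∈ crossings E | endpoints x.1 ∪ endpoints x.2 ⊆ S} := by
  have hinduced : IsGeometricGraph S {e ∈ E | endpoints e ⊆ S} :=
    h.mono hS (filter_subset _ _) fun e he => by
      simpa [endpoints, insert_subset_iff] using (mem_filter.1 he).2
  refine hinduced.card_le_three_mul_card_add_crossings.trans
    (Nat.add_le_add_left (card_le_card fun x hx => ?_) _)
  simp only [mem_crossings, mem_filter, union_subset_iff] at hx ⊢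
  tauto

theorem bernoulliMean_card_crossings (h : IsGeometricGraph P E) (p : ℝ) :
    bernoulliMean p P
      (fun S => (#{x ∈ crossings E | endpoints x.1 ∪ endpoints x.2 ⊆ S} : ℝ)) =
        p ^ 4 * #(crossings E) := by
  refine bernoulliMean_card_filter_subset (crossings E)
    (fun x => endpoints x.1 ∪ endpoints x.2) (fun x hx => ?_) fun x hx => ?_
  · obtain ⟨he, hf, -⟩ := mem_crossings.1 hx
    exact union_subset (h.endpoints_subset he) (h.endpoints_subset hf)
  · obtain ⟨he, hf, hcross⟩ := mem_crossings.1 hx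
    rw [card_union_of_disjoint (hcross.disjoint_endpoints (h.left_lt_right _ he).ne
      (h.left_lt_right _ hf).ne), h.card_endpoints he, h.card_endpoints hf]

theorem crossing_lemma (h : IsGeometricGraph P E) {p : ℝ} (hp₀ : 0 ≤ p) (hp₁ : p ≤ 1) :
    p ^ 2 * #E ≤ 3 * (p * #P) + p ^ 4 * #(crossings E) := by
  have hedges := bernoulliMean_card_filter_subset (p := p) E endpoints
    (fun _ he => h.endpoints_subset he) fun _ he => h.card_endpoints he
  rw [← hedges, ← bernoulliMean_card, ← h.bernoulliMean_card_crossings,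
    ← bernoulliMean_const_mul, ← bernoulliMean_add]
  exact bernoulliMean_mono hp₀ hp₁ fun S hS => mod_cast h.card_induced_le hS

end IsGeometricGraph

end CrossingLemma

/-- The pairs of points of `P` that are consecutive on some line of `L`. -/
noncomputable def consecutivePairs (P : Finset (𝕜 × 𝕜)) (L : Finset (NonverticalLine 𝕜)) :
    Finset (Edge 𝕜) :=
  {e ∈ P ×ˢ P | e.1.1 < e.2.1 ∧ supportLine e ∈ L ∧
    ∀ c ∈ P, e.1.1 < c.1 → c.1 < e.2.1 → (supportLine e).eval c.1 ≠ c.2}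

/-- The pairs of a point of `P` and a line of `L` through it. -/
def incidences (P : Finset (𝕜 × 𝕜)) (L : Finset (NonverticalLine 𝕜)) :
    Finset ((𝕜 × 𝕜) × NonverticalLine 𝕜) :=
  {x ∈ P ×ˢ L | x.2.eval x.1.1 = x.1.2}

/-- The incidences `(v, ℓ)` for which `v` is the leftmost point of `P` on `ℓ`. -/
noncomputable def leftmostIncidences (P : Finset (𝕜 × 𝕜)) (L : Finset (NonverticalLine 𝕜)) :
    Finset ((𝕜 × 𝕜) × NonverticalLine 𝕜) :=
  {x ∈ incidences P L | ∀ c ∈ P, x.2.eval c.1 = c.2 → x.1.1 ≤ c.1}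

section ConsecutivePairs

variable {P : Finset (𝕜 × 𝕜)} {L : Finset (NonverticalLine 𝕜)}

theorem mem_incidences {x : (𝕜 × 𝕜) × NonverticalLine 𝕜} :
    x ∈ incidences P L ↔ x.1 ∈ P ∧ x.2 ∈ L ∧ x.2.eval x.1.1 = x.1.2 := by
  simp only [incidences, mem_filter, mem_product, and_assoc]

theorem isGeometricGraph_consecutivePairs (hP : Set.InjOn Prod.fst (P : Set (𝕜 × 𝕜))) :
    IsGeometricGraph P (consecutivePairs P L) where
  injOn_fst := hP
  left_mem _ he := (mem_product.1 (mem_filter.1 he).1).1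
  right_mem _ he := (mem_product.1 (mem_filter.1 he).1).2
  left_lt_right _ he := (mem_filter.1 he).2.1
  eval_ne _ he := (mem_filter.1 he).2.2.2

theorem exists_mem_consecutivePairs {v : 𝕜 × 𝕜} {ℓ : NonverticalLine 𝕜} (hv : v ∈ P) (hℓ : ℓ ∈ L)
    (hvℓ : ℓ.eval v.1 = v.2) (hleft : ∃ c ∈ P, ℓ.eval c.1 = c.2 ∧ c.1 < v.1) :
    ∃ e ∈ consecutivePairs P L, e.2 = v ∧ supportLine e = ℓ := by
  obtain ⟨c, hc, hcℓ, hcv⟩ := hleft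
  obtain ⟨u, hu, hmax⟩ := exists_max_image {c ∈ P | ℓ.eval c.1 = c.2 ∧ c.1 < v.1} Prod.fst
    ⟨c, mem_filter.2 ⟨hc, hcℓ, hcv⟩⟩
  obtain ⟨huP, huℓ, huv⟩ := mem_filter.1 hu
  have hline : supportLine (u, v) = ℓ := eq_of_eval_eq_of_eval_eq huv.ne
    ((supportLine_eval_left (u, v)).trans huℓ.symm)
    ((supportLine_eval_right (e := (u, v)) huv.ne).trans hvℓ.symm)
  refine ⟨(u, v), mem_filter.2 ⟨mk_mem_product huP hv, huv, hline ▸ hℓ, ?_⟩, rfl, hline⟩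
  intro c hc huc hcv hcℓ
  rw [hline] at hcℓ
  exact huc.not_ge (hmax c (mem_filter.2 ⟨hc, hcℓ, hcv⟩))

theorem card_leftmostIncidences_le (hP : Set.InjOn Prod.fst (P : Set (𝕜 × 𝕜))) :
    #(leftmostIncidences P L) ≤ #L := by
  refine card_le_card_of_injOn Prod.snd
    (fun x hx => (mem_incidences.1 (mem_filter.1 hx).1).2.1) ?_
  rintro ⟨v, ℓ⟩ hv ⟨w, ℓ'⟩ hw (rfl : ℓ = ℓ')
  obtain ⟨hvI, hvmin⟩ := mem_filter.1 hv
  obtain ⟨hwI, hwmin⟩ := mem_filter.1 hw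
  obtain ⟨hvP, -, hvℓ⟩ := mem_incidences.1 hvI
  obtain ⟨hwP, -, hwℓ⟩ := mem_incidences.1 hwI
  exact Prod.ext (hP hvP hwP (le_antisymm (hvmin w hwP hwℓ) (hwmin v hvP hvℓ))) rfl

theorem card_incidences_sdiff_leftmostIncidences_le :
    #(incidences P L \ leftmostIncidences P L) ≤ #(consecutivePairs P L) := by
  refine card_le_card_of_forall_subsingleton (fun x e => e.2 = x.1 ∧ supportLine e = x.2) ?_ ?_
  · rintro ⟨v, ℓ⟩ hx
    obtain ⟨hxI, hxleft⟩ := mem_sdiff.1 hx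
    obtain ⟨hv, hℓ, hvℓ⟩ := mem_incidences.1 hxI
    simp only [leftmostIncidences, mem_filter, hxI, true_and, not_forall, not_le] at hxleft
    obtain ⟨c, hc, hcℓ, hcv⟩ := hxleft
    exact exists_mem_consecutivePairs hv hℓ hvℓ ⟨c, hc, hcℓ, hcv⟩
  · rintro e - x ⟨-, hx⟩ y ⟨-, hy⟩
    exact Prod.ext (hx.1.symm.trans hy.1) (hx.2.symm.trans hy.2)

theorem card_incidences_le_card_add_card_consecutivePairs
    (hP : Set.InjOn Prod.fst (P : Set (𝕜 × 𝕜))) :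
    #(incidences P L) ≤ #L + #(consecutivePairs P L) := by
  have hsplit : #(incidences P L \ leftmostIncidences P L) + #(leftmostIncidences P L) =
      #(incidences P L) := card_sdiff_add_card_eq_card (filter_subset _ _)
  have hfirst := card_leftmostIncidences_le (L := L) hP
  have hrest := card_incidences_sdiff_leftmostIncidences_le (P := P) (L := L)
  omega

end ConsecutivePairs

variable [IsStrictOrderedRing 𝕜]

theorem card_crossings_consecutivePairs_le {P : Finset (𝕜 × 𝕜)}
    (hP : Set.InjOn Prod.fst (P : Set (𝕜 × 𝕜))) (L : Finset (NonverticalLine 𝕜)) :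
    #(crossings (consecutivePairs P L)) ≤ #L ^ 2 := by
  have hG := isGeometricGraph_consecutivePairs (L := L) hP
  have hline {e : Edge 𝕜} (he : e ∈ consecutivePairs P L) : supportLine e ∈ L :=
    (mem_filter.1 he).2.2.1
  rw [sq, ← card_product]
  refine card_le_card_of_injOn (fun x => (supportLine x.1, supportLine x.2)) ?_ ?_
  · intro x hx
    obtain ⟨he, hf, -⟩ := mem_crossings.1 hx
    exact mk_mem_product (hline he) (hline hf)
  · rintro ⟨e, f⟩ hx ⟨e', f'⟩ hx' heq
    obtain ⟨he, hf, hcross⟩ := mem_crossings.1 hx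
    obtain ⟨he', hf', hcross'⟩ := mem_crossings.1 hx'
    obtain ⟨hee, hff⟩ := Prod.mk.inj heq
    refine Prod.ext (hG.eq_of_supportLine_eq he he' hee ?_ ?_)
      (hG.eq_of_supportLine_eq hf hf' hff ?_ ?_)
    · exact hcross'.left_lt_right_of_supportLine_eq hcross hee.symm hff.symm
    · exact hcross.left_lt_right_of_supportLine_eq hcross' hee hff
    · exact hcross'.symm.left_lt_right_of_supportLine_eq hcross.symm hff.symm hee.symm
    · exact hcross.symm.left_lt_right_of_supportLine_eq hcross'.symm hff hee

/-- The optimal sampling probability is `(n / l ^ 2) ^ (1 / 3)`, or `1` if that exceeds `1`. -/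
theorem le_of_forall_sampling_bound {a n l : ℝ} (hn : 0 < n) (hl : 0 ≤ l)
    (h : ∀ p : ℝ, 0 ≤ p → p ≤ 1 → p ^ 2 * a ≤ 3 * (p * n) + p ^ 4 * l ^ 2) :
    a ≤ 4 * (n * l) ^ (2 / 3 : ℝ) + 4 * n := by
  rcases lt_or_ge (l ^ 2) n with hlt | hle
  · have hone := h 1 zero_le_one le_rfl
    have := Real.rpow_nonneg (mul_nonneg hn.le hl) (2 / 3)
    linarith
  have hl₀ : 0 < l := hl.lt_of_ne fun heq => by rw [← heq] at hle; linarith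
  have cbrt_pow {y : ℝ} (hy : 0 < y) : (y ^ (1 / 3 : ℝ)) ^ 3 = y := by
    rw [← Real.rpow_natCast, ← Real.rpow_mul hy.le]; norm_num
  obtain ⟨u, hu, rfl⟩ : ∃ u : ℝ, 0 < u ∧ u ^ 3 = n := ⟨_, Real.rpow_pos_of_pos hn _, cbrt_pow hn⟩
  obtain ⟨w, hw, rfl⟩ : ∃ w : ℝ, 0 < w ∧ w ^ 3 = l := ⟨_, Real.rpow_pos_of_pos hl₀ _, cbrt_pow hl₀⟩
  have hpow : (u ^ 3 * w ^ 3) ^ (2 / 3 : ℝ) = (u * w) ^ 2 := by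
    rw [← mul_pow, ← Real.rpow_natCast, ← Real.rpow_mul (by positivity), ← Real.rpow_natCast]
    norm_num
  have huw : u ≤ w ^ 2 := le_of_pow_le_pow_left₀ three_ne_zero (by positivity) (by linarith)
  have hp := h (u / w ^ 2) (by positivity) ((div_le_one (by positivity)).2 huw)
  have hbound : (u / w ^ 2) ^ 2 * a ≤ (u / w ^ 2) ^ 2 * (4 * (u * w) ^ 2) := by
    refine hp.trans_eq ?_
    field_simp
    ring
  rw [hpow]
  linarith [le_of_mul_le_mul_left hbound (by positivity), pow_pos hu 3]

theorem szemeredi_trotter {P : Finset (𝕜 × 𝕜)} (hP : Set.InjOn Prod.fst (P : Set (𝕜 × 𝕜)))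
    (L : Finset (NonverticalLine 𝕜)) :
    (#(incidences P L) : ℝ) ≤ 4 * (#P * #L : ℝ) ^ (2 / 3 : ℝ) + 4 * #P + #L := by
  rcases P.eq_empty_or_nonempty with rfl | hne
  · simp [incidences]
  have hpairs : (#(consecutivePairs P L) : ℝ) ≤ 4 * (#P * #L : ℝ) ^ (2 / 3 : ℝ) + 4 * #P := by
    refine le_of_forall_sampling_bound (by exact_mod_cast hne.card_pos) (Nat.cast_nonneg _)
      fun p hp₀ hp₁ => ?_
    refine ((isGeometricGraph_consecutivePairs hP).crossing_lemma hp₀ hp₁).trans ?_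
    gcongr
    exact_mod_cast card_crossings_consecutivePairs_le hP L
  have hinc : (#(incidences P L) : ℝ) ≤ #L + #(consecutivePairs P L) := by
    exact_mod_cast card_incidences_le_card_add_card_consecutivePairs hP
  linarith

end Incidences

section SymplecticForm

variable {𝕜 : Type*} [Field 𝕜]

/-- The standard symplectic form on the plane over an arbitrary field; `omegaForm` over `ℝ`. -/
def symplecticForm (q q' : 𝕜 × 𝕜) : 𝕜 := q.1 * q'.2 - q.2 * q'.1

/-- The line `{x | symplecticForm q x = t}`. It is junk if `q.1 = 0`, when this set is vertical,
empty or everything. -/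
def levelLine (t : 𝕜) (q : 𝕜 × 𝕜) : NonverticalLine 𝕜 := ⟨q.2 / q.1, t / q.1⟩

/-- The shear with matrix `!![1, s; 0, 1]`, a symplectic map that brings a finite set into general
position with respect to vertical lines. -/
def shear (s : 𝕜) (q : 𝕜 × 𝕜) : 𝕜 × 𝕜 := (q.1 + s * q.2, q.2)

theorem levelLine_eval_eq_iff {t : 𝕜} {q x : 𝕜 × 𝕜} (hq : q.1 ≠ 0) :
    (levelLine t q).eval x.1 = x.2 ↔ symplecticForm q x = t := by
  simp only [levelLine, NonverticalLine.eval, symplecticForm]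
  field_simp
  constructor <;> intro h <;> linear_combination -h

theorem injOn_levelLine {t : 𝕜} (ht : t ≠ 0) :
    Set.InjOn (levelLine t) {q : 𝕜 × 𝕜 | q.1 ≠ 0} := by
  rintro ⟨a, b⟩ (ha : a ≠ 0) ⟨c, d⟩ (hc : c ≠ 0) h
  obtain ⟨hslope, hintercept⟩ := NonverticalLine.mk.inj h
  obtain rfl : a = c := by
    simpa [div_eq_div_iff, ha, hc, ht, eq_comm] using hintercept
  simpa [div_left_inj' ha] using hslope

theorem symplecticForm_shear (s : 𝕜) (q q' : 𝕜 × 𝕜) :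
    symplecticForm (shear s q) (shear s q') = symplecticForm q q' := by
  simp only [symplecticForm, shear]
  ring

theorem shear_zero (s : 𝕜) : shear s 0 = 0 := by
  simp [shear]

theorem shear_injective (s : 𝕜) : Function.Injective (shear s) := by
  rintro ⟨a, b⟩ ⟨c, d⟩ h
  simp only [shear, Prod.mk.injEq] at h
  obtain ⟨h, rfl⟩ := h
  simpa using h

theorem exists_injOn_fst_shear [Infinite 𝕜] (P : Finset (𝕜 × 𝕜)) :
    ∃ s : 𝕜, Set.InjOn Prod.fst (Set.image (shear s) P) := by
  obtain ⟨s, hs⟩ := Infinite.exists_notMem_finset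
    ((P ×ˢ P).image fun x => (x.1.1 - x.2.1) / (x.2.2 - x.1.2))
  refine ⟨s, Set.InjOn.image_of_comp fun q hq q' hq' h => ?_⟩
  have hsub : q.1 - q'.1 = s * (q'.2 - q.2) := by
    simp only [Function.comp_apply, shear] at h
    linear_combination h
  rcases eq_or_ne q'.2 q.2 with h₂ | h₂
  · rw [h₂, sub_self, mul_zero, sub_eq_zero] at hsub
    exact Prod.ext hsub h₂.symm
  · refine absurd (mem_image.2 ⟨(q, q'), mk_mem_product hq hq', ?_⟩) hs
    exact (div_eq_iff (sub_ne_zero.2 h₂)).2 hsub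

variable [LinearOrder 𝕜]

theorem card_filter_symplecticForm_le_card_incidences {t : 𝕜} (ht : t ≠ 0) {P : Finset (𝕜 × 𝕜)}
    (hP : ∀ q ∈ P, q ≠ 0 → q.1 ≠ 0) :
    #{x ∈ P ×ˢ P | symplecticForm x.1 x.2 = t} ≤
      #(incidences P ((P.erase 0).image (levelLine t))) := by
  have fst_ne_zero : ∀ q ∈ P, ∀ x, symplecticForm q x = t → q ≠ 0 ∧ q.1 ≠ 0 := by
    intro q hq x h
    have hq₀ : q ≠ 0 := by rintro rfl; simp [symplecticForm, ht.symm] at h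
    exact ⟨hq₀, hP q hq hq₀⟩
  refine card_le_card_of_injOn (fun x => (x.2, levelLine t x.1)) ?_ ?_
  · rintro ⟨q, x⟩ hx
    simp only [coe_filter, mem_product, Set.mem_ofPred_eq] at hx
    obtain ⟨⟨hq, hxP⟩, hform⟩ := hx
    obtain ⟨hq₀, hq₁⟩ := fst_ne_zero q hq x hform
    exact mem_incidences.2 ⟨hxP, mem_image_of_mem _ (mem_erase.2 ⟨hq₀, hq⟩),
      (levelLine_eval_eq_iff hq₁).2 hform⟩
  · rintro ⟨q, x⟩ hx ⟨q', x'⟩ hx' heq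
    simp only [coe_filter, mem_product, Set.mem_ofPred_eq] at hx hx'
    obtain ⟨rfl, hline⟩ := Prod.mk.inj heq
    rw [injOn_levelLine ht (fst_ne_zero q hx.1.1 x hx.2).2
      (fst_ne_zero q' hx'.1.1 x hx'.2).2 hline]

theorem card_filter_symplecticForm_le_image_shear (t s : 𝕜) (P : Finset (𝕜 × 𝕜)) :
    #{x ∈ P ×ˢ P | symplecticForm x.1 x.2 = t} ≤
      #{x ∈ P.image (shear s) ×ˢ P.image (shear s) | symplecticForm x.1 x.2 = t} := by
  refine card_le_card_of_injOn (Prod.map (shear s) (shear s)) ?_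
    ((shear_injective s).prodMap (shear_injective s)).injOn
  intro x hx
  obtain ⟨hxP, hform⟩ := mem_filter.1 hx
  obtain ⟨hx₁, hx₂⟩ := mem_product.1 hxP
  exact mem_filter.2 ⟨mk_mem_product (mem_image_of_mem _ hx₁) (mem_image_of_mem _ hx₂),
    (symplecticForm_shear s x.1 x.2).trans hform⟩

theorem card_filter_symplecticForm_le_of_injOn [IsStrictOrderedRing 𝕜] {t : 𝕜} (ht : t ≠ 0)
    {P : Finset (𝕜 × 𝕜)} (hP : Set.InjOn Prod.fst (insert 0 P : Set (𝕜 × 𝕜))) :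
    (#{x ∈ P ×ˢ P | symplecticForm x.1 x.2 = t} : ℝ) ≤ 9 * (#P : ℝ) ^ (4 / 3 : ℝ) := by
  have fst_ne_zero : ∀ q ∈ P, q ≠ 0 → q.1 ≠ 0 := fun q hq hq₀ h =>
    hq₀ (hP (Set.mem_insert_of_mem 0 hq) (Set.mem_insert 0 _) h)
  have hL : #((P.erase 0).image (levelLine t)) ≤ #P :=
    card_image_le.trans (card_le_card (erase_subset 0 P))
  have hpow : (#P * #P : ℝ) ^ (2 / 3 : ℝ) = (#P : ℝ) ^ (4 / 3 : ℝ) := by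
    rw [← sq, ← Real.rpow_natCast, ← Real.rpow_mul (Nat.cast_nonneg _)]
    norm_num
  have hself : (#P : ℝ) ≤ (#P : ℝ) ^ (4 / 3 : ℝ) := by
    rcases P.eq_empty_or_nonempty with rfl | hne
    · simp
    · exact Real.self_le_rpow_of_one_le (mod_cast hne.card_pos) (by norm_num)
  calc (#{x ∈ P ×ˢ P | symplecticForm x.1 x.2 = t} : ℝ)
      ≤ #(incidences P ((P.erase 0).image (levelLine t))) :=
        mod_cast card_filter_symplecticForm_le_card_incidences ht fst_ne_zero
    _ ≤ 4 * (#P * #((P.erase 0).image (levelLine t)) : ℝ) ^ (2 / 3 : ℝ) + 4 * #P +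
          #((P.erase 0).image (levelLine t)) :=
        szemeredi_trotter (hP.mono (Set.subset_insert 0 _)) _
    _ ≤ 4 * (#P * #P : ℝ) ^ (2 / 3 : ℝ) + 4 * #P + #P := by gcongr
    _ ≤ 9 * (#P : ℝ) ^ (4 / 3 : ℝ) := by rw [hpow]; linarith

theorem stmt_18_general [IsStrictOrderedRing 𝕜] (P : Finset (𝕜 × 𝕜)) {t : 𝕜} (ht : t ≠ 0) :
    (#{x ∈ P ×ˢ P | symplecticForm x.1 x.2 = t} : ℝ) ≤ 9 * (#P : ℝ) ^ (4 / 3 : ℝ) := by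
  obtain ⟨s, hs⟩ := exists_injOn_fst_shear (insert 0 P)
  rw [coe_insert, Set.image_insert_eq, shear_zero, ← coe_image] at hs
  calc (#{x ∈ P ×ˢ P | symplecticForm x.1 x.2 = t} : ℝ)
      ≤ #{x ∈ P.image (shear s) ×ˢ P.image (shear s) | symplecticForm x.1 x.2 = t} :=
        mod_cast card_filter_symplecticForm_le_image_shear t s P
    _ ≤ 9 * (#(P.image (shear s)) : ℝ) ^ (4 / 3 : ℝ) :=
        card_filter_symplecticForm_le_of_injOn ht hs
    _ = 9 * (#P : ℝ) ^ (4 / 3 : ℝ) := by rw [card_image_of_injective P (shear_injective s)]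

end SymplecticForm

theorem stmt_18 :
    ∃ C : ℝ, 0 < C ∧
      ∀ (P : Finset (ℝ × ℝ)) (t : ℝ), t ≠ 0 →
        ((((P ×ˢ P).filter fun qq => omegaForm qq.1 qq.2 = t).card : ℝ)
          ≤ C * (P.card : ℝ) ^ ((4 : ℝ) / 3)) :=
  ⟨9, by norm_num, fun P _ ht => stmt_18_general P ht⟩
end
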